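/- There exists a constant c > 0 (depending only on ξ and the sequence (x_k)) such that {x_{k,0}·ξ⁶} ≥ c·k^(−2γ⁷) for every integer k ≥ 1. -/

import Mathlib

/-!
Modulo `1`, the numbers `aₙ ξʲ` with `aₙ = x_{n+1,0}` obey linear recurrences up to `O(1 / Xₙ)`.
Write `Aⱼ(n) = aₙ ξʲ`, let `s = ±1` be the sign of `M_{n+1}`, and put
`U(n) = c_{n+1} c_{n+2} ξ`, `V(n) = c_{n+1} c_{n+2} ξ²` with `cₙ = x_{n+1,2}`. Then
`A₃(n+3) ≡ -A₃`, `A₄(n+3) ≡ -A₄ + 6 s A₃`, `A₅(n+3) ≡ -A₅ + 3 U + 6 s A₄ - 9 A₃`,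
`A₆(n+3) ≡ -A₆ + 3 V + 6 s A₅ - 9 A₄`, `U(n+3) ≡ U + 6 A₃`,
`V(n+3) ≡ V - 72 s A₃ + 12 A₄ - 6 s U`, where the right hand sides are taken at `n`.

Hence `A₆` moves along steps of length six by an almost constant drift. Multiplication of
`A₆(n+3+6t)` by `a_{n+1}²` kills the drift, and what is left is a residue `ρ(n)` which is almost
invariant under steps of length six. It stays away from the integers, because
`aₙ a_{n+2} ρ(n+4+6t) ≡ 16 s ξ` and `ξ` is irrational. The total error is `O((t + 1) / Xₙ)`, so for
`k = n + 3 + 6 t` the distance of `a_k ξ⁶` to the integers is at least of the order of `X_{n+1}⁻²`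
as soon as `Xₙ` is a large multiple of `k`. The least such `n` in the class of `k` modulo six has
`X_{n+1} = O(k ^ γ⁷)`.
-/

open Polynomial Filter

noncomputable def gold : ℝ := (1 + Real.sqrt 5) / 2

def Mmat (k : ℕ) : Matrix (Fin 2) (Fin 2) ℤ := !![3, (-1)^k; (-1)^(k+1), 0]

noncomputable def Xnorm (x : ℕ → Matrix (Fin 2) (Fin 2) ℤ) (k : ℕ) : ℝ :=
  max |(x k 0 0 : ℝ)| (max |(x k 0 1 : ℝ)| |(x k 1 1 : ℝ)|)

def MarkoffSeq (ξ : ℝ) (x : ℕ → Matrix (Fin 2) (Fin 2) ℤ) : Prop :=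
  (∀ k, 1 ≤ k → x k 0 1 = x k 1 0) ∧
  (∀ k, 1 ≤ k → (x k).det = 1) ∧
  ∃ c₁ c₂ c₃ : ℝ, 0 < c₁ ∧ 0 < c₂ ∧ 0 < c₃ ∧ ∀ k, 1 ≤ k →
    (c₁ * Xnorm x k ^ gold ≤ Xnorm x (k+1) ∧ Xnorm x (k+1) ≤ c₂ * Xnorm x k ^ gold) ∧
    (|(x k 0 0 : ℝ) * ξ - (x k 0 1 : ℝ)| ≤ c₃ / Xnorm x k ∧
     |(x k 0 1 : ℝ) * ξ - (x k 1 1 : ℝ)| ≤ c₃ / Xnorm x k) ∧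
    (x (k+2) = x (k+1) * Mmat (k+1) * x k ∧ x (k+2) = x k * Mmat k * x (k+1)) ∧
    (Xnorm x k < Xnorm x (k+1) ∧ Xnorm x k < (1 + ξ^2) * |(x k 0 0 : ℝ)|)

def polyNorm (P : Polynomial ℤ) : ℕ := P.support.sup fun i => (P.coeff i).natAbs

noncomputable def distInt (η : ℝ) : ℝ := |η - round η|

noncomputable def ratHeight (α : ℚ) : ℝ := max |(α.num : ℝ)| (α.den : ℝ)

def IsMinIntPoly (α : ℂ) (P : Polynomial ℤ) : Prop :=
  P ≠ 0 ∧ Polynomial.aeval α P = 0 ∧ P.content = 1 ∧ 0 < P.leadingCoeff ∧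
  ∀ Q : Polynomial ℤ, Q ≠ 0 → Polynomial.aeval α Q = 0 → P.degree ≤ Q.degree

noncomputable def Qpoly (x : ℕ → Matrix (Fin 2) (Fin 2) ℤ) (k : ℕ) : Polynomial ℤ :=
  Polynomial.C (x k 0 1 * x (k+1) 1 1 - x k 1 1 * x (k+1) 0 1)
  - Polynomial.C (x k 0 0 * x (k+1) 1 1 - x k 1 1 * x (k+1) 0 0) * Polynomial.X
  + Polynomial.C (x k 0 0 * x (k+1) 0 1 - x k 0 1 * x (k+1) 0 0) * Polynomial.X ^ 2

open Asymptotics Topology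

/-! ### Distance to the nearest integer -/

theorem norm_coe_unitAddCircle_pos_of_irrational {y : ℝ} (hy : Irrational y) :
    0 < ‖(y : UnitAddCircle)‖ := by
  rw [norm_pos_iff, Ne, AddCircle.coe_eq_zero_iff]
  rintro ⟨n, hn⟩
  exact hy ⟨n, by simpa using hn⟩

theorem coe_intCast_unitAddCircle (m : ℤ) : ((m : ℝ) : UnitAddCircle) = 0 :=
  (AddCircle.coe_eq_zero_iff 1).2 ⟨m, by simp⟩

theorem isBigO_zsmul {ι G : Type*} [SeminormedAddCommGroup G] {l : Filter ι} {m : ι → ℤ}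
    {f : ι → G} {u v : ι → ℝ} (hm : (fun i => (m i : ℝ)) =O[l] u) (hf : f =O[l] v) :
    (fun i => m i • f i) =O[l] fun i => u i * v i := by
  refine (isBigO_of_le l fun i => ?_).trans (hm.mul hf.norm_left)
  simpa [Int.norm_eq_abs] using norm_zsmul_le (m i) (f i)

theorem isBigO_zsmul_comp_shift {G : Type*} [SeminormedAddCommGroup G] {f : ℕ × ℕ → G} {m : ℕ → ℤ}
    {u v : ℕ → ℝ} {j : ℕ} (hf : f =O[atTop ×ˢ ⊤] fun i => u i.1 * v i.2)
    (hm : (fun n => m n * u (n + j)) =O[atTop] u) :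
    (fun i : ℕ × ℕ => m i.1 • f (i.1 + j, i.2)) =O[atTop ×ˢ ⊤] fun i => u i.1 * v i.2 := by
  have hshift : Tendsto (fun i : ℕ × ℕ => (i.1 + j, i.2)) (atTop ×ˢ ⊤) (atTop ×ˢ ⊤) :=
    (tendsto_add_atTop_nat j).prodMap tendsto_id
  calc (fun i : ℕ × ℕ => m i.1 • f (i.1 + j, i.2))
      =O[atTop ×ˢ ⊤] fun i => m i.1 * (u (i.1 + j) * v i.2) :=
        isBigO_zsmul (isBigO_refl _ _) (hf.comp_tendsto hshift)
    _ = fun i => m i.1 * u (i.1 + j) * v i.2 := by simp only [mul_assoc]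
    _ =O[atTop ×ˢ ⊤] fun i => u i.1 * v i.2 :=
        (hm.comp_tendsto tendsto_fst).mul (isBigO_refl _ _)

theorem one_isBigO_of_forall_le_norm_zsmul {G : Type*} [SeminormedAddCommGroup G] {f : ℕ → G}
    {m : ℕ → ℤ} {p r N : ℕ} (hp : 0 < p) {d : ℝ} (hd : 0 < d)
    (h : ∀ n ≥ N, ∀ t, d ≤ ‖m n • f (n + r + p * t)‖) : (fun _ => (1 : ℝ)) =O[atTop] f := by
  let M : ℝ := ∑ n ∈ Finset.range (N + p), |(m n : ℝ)|
  refine .of_bound (M / d) ((eventually_ge_atTop (N + r)).mono fun k hk => ?_)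
  have hmod := Nat.mod_add_div (k - r - N) p
  have hlt := Nat.mod_lt (k - r - N) hp
  have hmM : |(m (N + (k - r - N) % p) : ℝ)| ≤ M :=
    Finset.single_le_sum (f := fun n => |(m n : ℝ)|) (fun _ _ => abs_nonneg _)
      (Finset.mem_range.2 (by omega))
  rw [norm_one, div_mul_eq_mul_div, one_le_div hd]
  calc d ≤ ‖m (N + (k - r - N) % p) •
          f (N + (k - r - N) % p + r + p * ((k - r - N) / p))‖ := h _ (by omega) _
    _ = ‖m (N + (k - r - N) % p) • f k‖ := by congr 3; omega
    _ ≤ ‖m (N + (k - r - N) % p)‖ * ‖f k‖ := norm_zsmul_le _ _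
    _ ≤ M * ‖f k‖ := by
        rw [Int.norm_eq_abs]
        gcongr

/-! ### Sequences of Fibonacci growth -/

/-- A nondecreasing unbounded sequence of reals `≥ 1` with `X (n + 2) ≍ X n * X (n + 1)`; up to
constants, the shift of the index then raises its terms to the power of the golden ratio. -/
class FibonacciGrowth (X : ℕ → ℝ) : Prop where
  one_le : ∀ n, 1 ≤ X n
  monotone : Monotone X
  tendsto_atTop : Tendsto X atTop atTop
  isTheta : (fun n => X (n + 2)) =Θ[atTop] fun n => X n * X (n + 1)

/-- The comparison sequence of exponent `e`, which stands for `e.1 + e.2 * γ` with `γ` the golden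
ratio, since `X (n + 1)` is of the order of `X n ^ γ`. -/
noncomputable def growthScale (X : ℕ → ℝ) (e : ℤ × ℤ) (n : ℕ) : ℝ := X n ^ e.1 * X (n + 1) ^ e.2

/-- Multiplication of the exponent `e.1 + e.2 * γ` by the golden ratio `γ`. -/
def goldMul (e : ℤ × ℤ) : ℤ × ℤ := (e.2, e.1 + e.2)

/-- `f n` is of order at most `X n ^ (e.1 + e.2 * γ)`. -/
def OfOrder (X : ℕ → ℝ) (e : ℤ × ℤ) (f : ℕ → ℝ) : Prop := f =O[atTop] growthScale X e

/-- The distance of `f n` to the integers, which is the norm of its class in `ℝ ⧸ ℤ`, is of order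
at most `X n ^ (e.1 + e.2 * γ)`. -/
def NearInt (X : ℕ → ℝ) (e : ℤ × ℤ) (f : ℕ → ℝ) : Prop :=
  (fun n => (f n : UnitAddCircle)) =O[atTop] growthScale X e

theorem growthScale_neg_one (X : ℕ → ℝ) : growthScale X (-1, 0) = fun n => (X n)⁻¹ := by
  ext n
  simp [growthScale]

namespace FibonacciGrowth

variable (X : ℕ → ℝ) [FibonacciGrowth X]

theorem pos (n : ℕ) : 0 < X n := one_pos.trans_le (one_le n)

theorem growthScale_add (e e' : ℤ × ℤ) (n : ℕ) :
    growthScale X (e + e') n = growthScale X e n * growthScale X e' n := by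
  simp only [growthScale, Prod.fst_add, Prod.snd_add, zpow_add₀ (pos X _).ne']
  ring

theorem growthScale_pos (e : ℤ × ℤ) (n : ℕ) : 0 < growthScale X e n :=
  mul_pos (zpow_pos (pos X n) _) (zpow_pos (pos X (n + 1)) _)

theorem growthScale_mono {e e' : ℤ × ℤ} (h : e.2 ≤ e'.2) (h' : e.1 + e.2 ≤ e'.1 + e'.2) (n : ℕ) :
    growthScale X e n ≤ growthScale X e' n := by
  have hpos := pos X
  calc X n ^ e.1 * X (n + 1) ^ e.2
      ≤ X n ^ (e'.1 + (e'.2 - e.2)) * X (n + 1) ^ e.2 := by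
        gcongr
        · exact (zpow_pos (hpos _) _).le
        · exact one_le n
        · omega
    _ = X n ^ e'.1 * (X n ^ (e'.2 - e.2) * X (n + 1) ^ e.2) := by
        rw [zpow_add₀ (hpos n).ne', mul_assoc]
    _ ≤ X n ^ e'.1 * (X (n + 1) ^ (e'.2 - e.2) * X (n + 1) ^ e.2) := by
        have := zpow_le_zpow_left₀ (sub_nonneg.2 h) (hpos n).le (monotone (X := X) n.le_succ)
        have := zpow_pos (hpos (n + 1)) e.2
        have := zpow_pos (hpos n) e'.1
        gcongr
    _ = X n ^ e'.1 * X (n + 1) ^ e'.2 := by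
        rw [← zpow_add₀ (hpos _).ne', sub_add_cancel]

theorem growthScale_isBigO {e e' : ℤ × ℤ} (h : e.2 ≤ e'.2) (h' : e.1 + e.2 ≤ e'.1 + e'.2) :
    growthScale X e =O[atTop] growthScale X e' :=
  .of_norm_le fun n => by
    rw [Real.norm_of_nonneg (growthScale_pos X e n).le]
    exact growthScale_mono X h h' n

theorem growthScale_succ_isBigO (e : ℤ × ℤ) :
    (fun n => growthScale X e (n + 1)) =O[atTop] growthScale X (goldMul e) := by
  refine (((isBigO_refl (fun n => X (n + 1) ^ e.1) atTop).mul
    ((isTheta (X := X)).zpow e.2).isBigO)).congr_right fun n => ?_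
  simp only [growthScale, goldMul, mul_zpow, zpow_add₀ (pos X (n + 1)).ne']
  ring

theorem eventually_two_mul_le_succ : ∀ᶠ n in atTop, 2 * X n ≤ X (n + 1) := by
  obtain ⟨c, hc, h⟩ := (isTheta (X := X)).isBigO_symm.exists_pos
  have key : ∀ᶠ n in atTop, 2 * X (n + 1) ≤ X (n + 2) := by
    filter_upwards [h.bound, (tendsto_atTop (X := X)).eventually_ge_atTop (c * 2)] with n hn hX
    have hpos := pos X (n + 1)
    rw [Real.norm_of_nonneg (mul_pos (pos X n) hpos).le, Real.norm_of_nonneg (pos X _).le] at hn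
    have : c * 2 * X (n + 1) ≤ X n * X (n + 1) := by gcongr
    exact le_of_mul_le_mul_left (by linarith) hc
  rwa [← map_add_atTop_eq_nat 1]

theorem tendsto_inv : Tendsto (fun n => (X n)⁻¹) atTop (𝓝 0) :=
  tendsto_inv_atTop_zero.comp tendsto_atTop

end FibonacciGrowth

namespace OfOrder

variable {X : ℕ → ℝ} {e e' : ℤ × ℤ} {f g : ℕ → ℝ}

theorem congr (h : OfOrder X e f) (hfg : ∀ n, g n = f n) : OfOrder X e g := by
  rwa [show g = f from funext hfg]

theorem add (hf : OfOrder X e f) (hg : OfOrder X e g) : OfOrder X e fun n => f n + g n :=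
  IsBigO.add hf hg

theorem sub (hf : OfOrder X e f) (hg : OfOrder X e g) : OfOrder X e fun n => f n - g n :=
  IsBigO.sub hf hg

theorem of_isBigO_self (h : f =O[atTop] X) : OfOrder X (1, 0) f :=
  h.congr_right fun n => by simp [growthScale]

theorem of_isBigO_inv (h : f =O[atTop] fun n => (X n)⁻¹) : OfOrder X (-1, 0) f := by
  rwa [OfOrder, growthScale_neg_one]

theorem isBigO_inv (h : OfOrder X (-1, 0) f) : f =O[atTop] fun n => (X n)⁻¹ := by
  rwa [OfOrder, growthScale_neg_one] at h

theorem const_mul (r : ℝ) (h : OfOrder X e f) : OfOrder X e fun n => r * f n :=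
  IsBigO.const_mul_left h r

variable [FibonacciGrowth X]

theorem mono (h : OfOrder X e f) (hq : e.2 ≤ e'.2 := by decide)
    (hpq : e.1 + e.2 ≤ e'.1 + e'.2 := by decide) : OfOrder X e' f :=
  IsBigO.trans h (FibonacciGrowth.growthScale_isBigO X hq hpq)

theorem mul (hf : OfOrder X e f) (hg : OfOrder X e' g) :
    OfOrder X (e + e') fun n => f n * g n :=
  (IsBigO.mul hf hg).congr_right fun n => (FibonacciGrowth.growthScale_add X e e' n).symm

theorem shift (h : OfOrder X e f) : OfOrder X (goldMul e) fun n => f (n + 1) :=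
  (IsBigO.comp_tendsto h (tendsto_add_atTop_nat 1)).trans
    (FibonacciGrowth.growthScale_succ_isBigO X e)

theorem shift_iterate (h : OfOrder X e f) (j : ℕ) :
    OfOrder X (goldMul^[j] e) fun n => f (n + j) := by
  induction j with
  | zero => exact h
  | succ j ih =>
    rw [Function.iterate_succ_apply']
    exact ih.shift.congr fun n => by rw [add_right_comm, add_assoc]

end OfOrder

namespace NearInt

variable {X : ℕ → ℝ} {e e' : ℤ × ℤ} {f g : ℕ → ℝ}

theorem congr (h : NearInt X e f) (hfg : ∀ n, g n = f n) : NearInt X e g := by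
  rwa [show g = f from funext hfg]

theorem of_eq_int_add (m : ℕ → ℤ) (h : OfOrder X e f) (hfg : ∀ n, g n = m n + f n) :
    NearInt X e g := by
  refine (isBigO_of_le _ fun n => ?_).trans h
  rw [hfg, AddCircle.coe_add, coe_intCast_unitAddCircle, zero_add]
  exact QuotientAddGroup.norm_mk_le_norm

theorem of_ofOrder (h : OfOrder X e f) : NearInt X e f :=
  of_eq_int_add 0 h fun n => by simp

theorem add (hf : NearInt X e f) (hg : NearInt X e g) : NearInt X e fun n => f n + g n :=
  IsBigO.add hf hg

theorem sub (hf : NearInt X e f) (hg : NearInt X e g) : NearInt X e fun n => f n - g n :=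
  IsBigO.sub hf hg

theorem isBigO_inv (h : NearInt X (-1, 0) f) :
    (fun n => (f n : UnitAddCircle)) =O[atTop] fun n => (X n)⁻¹ := by
  rwa [NearInt, growthScale_neg_one] at h

theorem const_mul (m : ℤ) (h : NearInt X e f) : NearInt X e fun n => m * f n := by
  simp only [NearInt, QuotientAddGroup.mk_int_mul]
  exact (isBigO_zsmul (isBigO_refl _ _) h).trans (isBigO_const_mul_self _ _ _)

variable [FibonacciGrowth X]

theorem mono (h : NearInt X e f) (hq : e.2 ≤ e'.2 := by decide)
    (hpq : e.1 + e.2 ≤ e'.1 + e'.2 := by decide) : NearInt X e' f :=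
  IsBigO.trans h (FibonacciGrowth.growthScale_isBigO X hq hpq)

theorem int_mul {m : ℕ → ℤ} (hm : OfOrder X e fun n => m n) (hf : NearInt X e' f) :
    NearInt X (e + e') fun n => m n * f n := by
  simp only [NearInt, QuotientAddGroup.mk_int_mul]
  exact (isBigO_zsmul hm hf).congr_right fun n =>
    (FibonacciGrowth.growthScale_add X e e' n).symm

theorem shift (h : NearInt X e f) : NearInt X (goldMul e) fun n => f (n + 1) :=
  (IsBigO.comp_tendsto h (tendsto_add_atTop_nat 1)).trans
    (FibonacciGrowth.growthScale_succ_isBigO X e)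

end NearInt

/-! ### Sums over arithmetic progressions -/

namespace FibonacciGrowth

variable (X : ℕ → ℝ) [FibonacciGrowth X] {G : Type*} [SeminormedAddCommGroup G]

theorem isBigO_sub_of_isBigO_step {f : ℕ → G} {p : ℕ} (hp : 0 < p)
    (h : (fun n => f (n + p) - f n) =O[atTop] fun n => (X n)⁻¹) :
    (fun i : ℕ × ℕ => f (i.1 + p * i.2) - f i.1) =O[atTop ×ˢ ⊤] fun i => (X i.1)⁻¹ := by
  obtain ⟨C, hC, h⟩ := h.exists_nonneg
  obtain ⟨N, hN⟩ := eventually_atTop.1 (h.bound.and (eventually_two_mul_le_succ X))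
  have key (t : ℕ) : ∀ n ≥ N, ‖f (n + p * t) - f n‖ ≤ 2 * C * (X n)⁻¹ := by
    induction t with
    | zero =>
      intro n _
      have := pos X n
      simp only [mul_zero, add_zero, sub_self, norm_zero]
      positivity
    | succ t ih =>
      intro n hn
      have hX : 2 * X n ≤ X (n + p) := (hN n hn).2.trans (monotone (by omega))
      have hstep := (hN n hn).1
      rw [Real.norm_of_nonneg (inv_nonneg.2 (pos X n).le)] at hstep
      calc ‖f (n + p * (t + 1)) - f n‖
          = ‖(f (n + p + p * t) - f (n + p)) + (f (n + p) - f n)‖ := by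
            rw [sub_add_sub_cancel, mul_add_one, add_assoc, add_comm p]
        _ ≤ 2 * C * (X (n + p))⁻¹ + C * (X n)⁻¹ :=
            norm_add_le_of_le (ih (n + p) (by omega)) hstep
        _ ≤ 2 * C * (2 * X n)⁻¹ + C * (X n)⁻¹ := by
            have := pos X n
            gcongr
        _ = 2 * C * (X n)⁻¹ := by rw [mul_inv]; ring
  refine .of_bound (2 * C) ?_
  filter_upwards [(eventually_ge_atTop N).prod_inl ⊤] with i hi
  rw [Real.norm_of_nonneg (inv_nonneg.2 (pos X i.1).le)]
  exact key i.2 i.1 hi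

theorem isBigO_sub_sub_nsmul_of_isBigO_step {f g : ℕ → G} {p : ℕ} (hp : 0 < p)
    (hf : (fun n => f (n + p) - f n - g n) =O[atTop] fun n => (X n)⁻¹)
    (hg : (fun n => g (n + p) - g n) =O[atTop] fun n => (X n)⁻¹) :
    (fun i : ℕ × ℕ => f (i.1 + p * i.2) - f i.1 - i.2 • g i.1) =O[atTop ×ˢ ⊤]
      fun i => (X i.1)⁻¹ * i.2 := by
  obtain ⟨C, hC, hf⟩ := hf.exists_nonneg
  obtain ⟨D, hD, hg⟩ := (isBigO_sub_of_isBigO_step X hp hg).exists_nonneg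
  refine .of_bound (C + D) (mem_prod_top.2 ?_)
  filter_upwards [eventually_forall_ge_atTop.2 hf.bound, mem_prod_top.1 hg.bound] with n hf hg t
  have hpos := fun m => inv_pos.2 (pos X m)
  simp only [Real.norm_of_nonneg (hpos _).le] at hf hg
  simp only [norm_mul, Real.norm_of_nonneg (hpos _).le, Real.norm_natCast]
  induction t with
  | zero => simp
  | succ t ih =>
    have hX : (X (n + p * t))⁻¹ ≤ (X n)⁻¹ :=
      inv_anti₀ (pos X n) (monotone (Nat.le_add_right n _))
    calc ‖f (n + p * (t + 1)) - f n - (t + 1) • g n‖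
        = ‖(f (n + p * t + p) - f (n + p * t) - g (n + p * t)) + (g (n + p * t) - g n) +
            (f (n + p * t) - f n - t • g n)‖ := by
          rw [mul_add_one, ← add_assoc, succ_nsmul]
          congr 1
          abel
      _ ≤ C * (X n)⁻¹ + D * (X n)⁻¹ + (C + D) * ((X n)⁻¹ * t) :=
          norm_add_le_of_le (norm_add_le_of_le
            ((hf _ (Nat.le_add_right n _)).trans (by gcongr)) (hg t)) ih
      _ = (C + D) * ((X n)⁻¹ * (t + 1 : ℕ)) := by push_cast; ring

theorem natCast_isLittleO : (fun n : ℕ => (n : ℝ)) =o[atTop] X := by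
  refine (isLittleO_coe_const_pow_of_one_lt (one_lt_two (α := ℝ))).trans_isBigO ?_
  obtain ⟨N, hN⟩ := eventually_atTop.1 (eventually_two_mul_le_succ X)
  refine .of_bound (2 ^ N) ((eventually_ge_atTop N).mono fun n hn => ?_)
  rw [Real.norm_of_nonneg (by positivity), Real.norm_of_nonneg (pos X n).le]
  induction n, hn using Nat.le_induction with
  | base => exact le_mul_of_one_le_right (by positivity) (one_le N)
  | succ n hn ih =>
    calc (2 : ℝ) ^ (n + 1) ≤ 2 ^ N * (2 * X n) := by rw [pow_succ]; linarith
      _ ≤ 2 ^ N * X (n + 1) := by gcongr; exact hN n hn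

theorem isBigO_rpow_pow {θ : ℝ} (hθ : 0 ≤ θ)
    (h : (fun n => X (n + 1)) =O[atTop] fun n => X n ^ θ) (j : ℕ) :
    (fun n => X (n + j)) =O[atTop] fun n => X n ^ θ ^ j := by
  induction j with
  | zero => simpa using isBigO_refl X atTop
  | succ j ih =>
    have hpos (n : ℕ) : 0 ≤ X n := (pos X n).le
    refine ((h.comp_tendsto (tendsto_add_atTop_nat j)).trans
      (ih.rpow hθ (.of_forall fun n => Real.rpow_nonneg (hpos n) _))).congr_right fun n => ?_
    rw [← Real.rpow_mul (hpos n), pow_succ]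

theorem eventually_mul_add_le {A : ℝ} (hA : 0 < A) (m : ℕ) :
    ∀ᶠ n : ℕ in atTop, A * (n + m : ℕ) ≤ X n := by
  filter_upwards [(natCast_isLittleO X).bound (by positivity : 0 < (2 * A)⁻¹),
    eventually_ge_atTop m] with n hn hm
  rw [Real.norm_natCast, Real.norm_of_nonneg (pos X n).le, inv_mul_eq_div,
    le_div_iff₀' (by positivity)] at hn
  calc A * (n + m : ℕ) ≤ A * (n + n : ℕ) := by gcongr
    _ = 2 * A * n := by push_cast; ring
    _ ≤ X n := hn

theorem exists_index_of_isBigO_rpow {θ : ℝ} (hθ : 0 ≤ θ)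
    (h : (fun n => X (n + 1)) =O[atTop] fun n => X n ^ θ) {p : ℕ} (hp : 0 < p) (r N : ℕ)
    {A : ℝ} (hA : 0 < A) :
    ∃ B, ∀ᶠ k : ℕ in atTop, ∃ n t, N ≤ n ∧ n + r + p * t = k ∧ A * k ≤ X n ∧
      X (n + 1) ≤ B * (k : ℝ) ^ θ ^ (p + 1) := by
  obtain ⟨C, hC, hrpow⟩ := (isBigO_rpow_pow X hθ h (p + 1)).exists_nonneg
  obtain ⟨M, hM⟩ := eventually_atTop.1 hrpow.bound
  refine ⟨C * A ^ θ ^ (p + 1), ?_⟩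
  filter_upwards [(tendsto_sub_atTop_nat (p + r)).eventually (eventually_mul_add_le X hA (p + r)),
    eventually_ge_atTop (p + r),
    (tendsto_natCast_atTop_atTop.const_mul_atTop hA).eventually_gt_atTop (X (M + N))]
    with k hXk hk hkX
  rw [Nat.sub_add_cancel hk] at hXk
  obtain ⟨J, hJ, hJ'⟩ := Nat.exists_not_and_succ_of_not_zero_of_exists (p := fun j => A * k ≤ X j)
    (not_le.2 ((monotone (Nat.zero_le _)).trans_lt hkX)) ⟨_, hXk⟩
  rw [not_le] at hJ
  have hMN : M + N < J + 1 := (monotone (X := X)).reflect_lt (hkX.trans_le hJ')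
  have hJk : J < k - (p + r) := (monotone (X := X)).reflect_lt (hJ.trans_le hXk)
  have hmod := Nat.mod_add_div (k - r - (J + 1)) p
  have hlt := Nat.mod_lt (k - r - (J + 1)) hp
  refine ⟨J + 1 + (k - r - (J + 1)) % p, (k - r - (J + 1)) / p, by omega, by omega,
    hJ'.trans (monotone (by omega)), ?_⟩
  have hbound := hM J (by omega)
  rw [Real.norm_of_nonneg (pos X _).le,
    Real.norm_of_nonneg (Real.rpow_nonneg (pos X J).le _)] at hbound
  calc X (J + 1 + (k - r - (J + 1)) % p + 1) ≤ X (J + (p + 1)) := monotone (by omega)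
    _ ≤ C * X J ^ θ ^ (p + 1) := hbound
    _ ≤ C * (A * k) ^ θ ^ (p + 1) := by
        gcongr
        exact (pos X J).le
    _ = C * A ^ θ ^ (p + 1) * (k : ℝ) ^ θ ^ (p + 1) := by
        rw [Real.mul_rpow hA.le k.cast_nonneg, mul_assoc]

theorem exists_one_le_mul_norm_zsmul {f ρ : ℕ → G} {m : ℕ → ℤ} {p r : ℕ} (hp : 0 < p)
    (hρ : (fun _ => (1 : ℝ)) =O[atTop] ρ)
    (hf : (fun i : ℕ × ℕ => m i.1 • f (i.1 + r + p * i.2) - ρ i.1) =O[atTop ×ˢ ⊤]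
      fun i => (X i.1)⁻¹ * (i.2 + 1)) :
    ∃ A > 0, ∃ K > 0, ∀ᶠ n in atTop, ∀ t k : ℕ, n + r + p * t = k → 1 ≤ k → A * k ≤ X n →
      1 ≤ K * ‖m n • f k‖ := by
  obtain ⟨K, hK, hρ⟩ := hρ.exists_pos
  obtain ⟨C, hC, hf⟩ := hf.exists_pos
  refine ⟨4 * C * K, by positivity, 2 * K, by positivity, ?_⟩
  filter_upwards [hρ.bound, mem_prod_top.1 hf.bound] with n hρn hfn t k hk hk1 hkX
  have hfn : ‖m n • f (n + r + p * t) - ρ n‖ ≤ C * ‖(X n)⁻¹ * (t + 1)‖ := hfn t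
  have hXn : 0 < X n := pos X n
  rw [norm_one] at hρn
  rw [hk, Real.norm_of_nonneg (by positivity)] at hfn
  have htk : (t + 1 : ℝ) ≤ 2 * k := by
    have : t ≤ p * t := Nat.le_mul_of_pos_left t hp
    exact_mod_cast (by omega : t + 1 ≤ 2 * k)
  have herr : K * (C * ((X n)⁻¹ * (t + 1))) ≤ 1 / 2 := by
    rw [show K * (C * ((X n)⁻¹ * (t + 1))) = C * K * (t + 1) / X n by ring, div_le_iff₀ hXn]
    have : C * K * (t + 1) ≤ C * K * (2 * k) := by gcongr
    linarith
  have hlow : K * ‖ρ n‖ ≤ K * (‖m n • f k‖ + C * ((X n)⁻¹ * (t + 1))) := by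
    gcongr
    exact (norm_le_insert _ _).trans (by gcongr)
  linarith

theorem rpow_isBigO_of_isBigO_zsmul_sub {θ : ℝ} (hθ : 0 ≤ θ)
    (hX : (fun n => X (n + 1)) =O[atTop] fun n => X n ^ θ) {f ρ : ℕ → G} {m : ℕ → ℤ} {p q r : ℕ}
    (hp : 0 < p) (hm : (fun n => (m n : ℝ)) =O[atTop] fun n => X (n + 1) ^ q)
    (hρ : (fun _ => (1 : ℝ)) =O[atTop] ρ)
    (hf : (fun i : ℕ × ℕ => m i.1 • f (i.1 + r + p * i.2) - ρ i.1) =O[atTop ×ˢ ⊤]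
      fun i => (X i.1)⁻¹ * (i.2 + 1)) :
    (fun k : ℕ => (k : ℝ) ^ (-(q * θ ^ (p + 1)))) =O[atTop] f := by
  obtain ⟨A, hA, K, hK, hlow⟩ := exists_one_le_mul_norm_zsmul X hp hρ hf
  obtain ⟨D, hD, hm⟩ := hm.exists_pos
  obtain ⟨N, hN⟩ := eventually_atTop.1 (hlow.and hm.bound)
  obtain ⟨B, hB⟩ := exists_index_of_isBigO_rpow X hθ hX hp r N hA
  refine .of_bound (K * (D * B ^ q)) ?_
  filter_upwards [hB, eventually_ge_atTop 1] with k ⟨n, t, hn, hk, hkX, hXk⟩ hk1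
  obtain ⟨hlown, hmn⟩ := hN n hn
  have hk0 : (1 : ℝ) ≤ k := mod_cast hk1
  have hmk : ‖m n‖ ≤ D * (B ^ q * (k : ℝ) ^ (q * θ ^ (p + 1))) := by
    calc ‖m n‖ ≤ D * X (n + 1) ^ q := by
          rwa [Real.norm_of_nonneg (pow_nonneg (pos X _).le q), Real.norm_eq_abs,
            ← Int.norm_eq_abs] at hmn
      _ ≤ D * (B * (k : ℝ) ^ θ ^ (p + 1)) ^ q := by
          gcongr
          exact (pos X _).le
      _ = D * (B ^ q * (k : ℝ) ^ (q * θ ^ (p + 1))) := by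
          rw [mul_pow, mul_comm (q : ℝ), Real.rpow_mul_natCast k.cast_nonneg]
  rw [Real.norm_of_nonneg (by positivity), Real.rpow_neg k.cast_nonneg,
    inv_le_iff_one_le_mul₀ (by positivity)]
  calc 1 ≤ K * ‖m n • f k‖ := hlown t k hk hk1 hkX
    _ ≤ K * (‖m n‖ * ‖f k‖) := by
        gcongr
        exact norm_zsmul_le _ _
    _ ≤ K * (D * (B ^ q * (k : ℝ) ^ (q * θ ^ (p + 1))) * ‖f k‖) := by gcongr
    _ = K * (D * B ^ q) * ‖f k‖ * (k : ℝ) ^ (q * θ ^ (p + 1)) := by ring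

end FibonacciGrowth

theorem FibonacciGrowth.of_isTheta_rpow_goldenRatio {X : ℕ → ℝ} (one_le : ∀ n, 1 ≤ X n)
    (monotone : Monotone X) (tendsto_atTop : Tendsto X atTop atTop)
    (h : (fun n => X (n + 1)) =Θ[atTop] fun n => X n ^ Real.goldenRatio) :
    FibonacciGrowth X where
  one_le := one_le
  monotone := monotone
  tendsto_atTop := tendsto_atTop
  isTheta := by
    have hpos (n : ℕ) : 0 < X n := one_pos.trans_le (one_le n)
    have hrpow (n : ℕ) : 0 ≤ X n ^ Real.goldenRatio := Real.rpow_nonneg (hpos n).le _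
    have hinv (n : ℕ) : (X n ^ Real.goldenRatio) ^ (Real.goldenRatio - 1) = X n := by
      rw [← Real.rpow_mul (hpos n).le, mul_sub_one, ← sq, Real.goldenRatio_sq,
        add_sub_cancel_left, Real.rpow_one]
    have hpow : (fun n => X (n + 1) ^ (Real.goldenRatio - 1)) =Θ[atTop] X := by
      simpa only [hinv] using
        IsTheta.rpow (r := Real.goldenRatio - 1) (.of_forall fun n => (hpos _).le)
          (.of_forall hrpow) h
    have hsplit (n : ℕ) : X (n + 1) ^ Real.goldenRatio =
        X (n + 1) ^ (Real.goldenRatio - 1) * X (n + 1) := by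
      rw [Real.rpow_sub_one (hpos _).ne', div_mul_cancel₀ _ (hpos _).ne']
    have hshift := tendsto_add_atTop_nat 1
    refine IsTheta.trans ⟨h.1.comp_tendsto hshift, h.2.comp_tendsto hshift⟩ ?_
    simpa only [Function.comp_def, hsplit] using hpow.mul (isTheta_refl _ atTop)

/-! ### The sequence of matrices -/

theorem mul_self_add_one_of_det_eq_one {R : Type*} [CommRing R] [Nontrivial R]
    {A : Matrix (Fin 2) (Fin 2) R} (h : A.det = 1) : A * A + 1 = A.trace • A := by
  have key := A.aeval_self_charpoly
  rw [Matrix.charpoly_fin_two, h] at key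
  simp only [pow_two, map_one, map_sub, map_add, map_mul, aeval_X, aeval_C,
    Algebra.algebraMap_eq_smul_one, Algebra.smul_mul_assoc, one_mul] at key
  rwa [sub_add_eq_add_sub, sub_eq_zero] at key

theorem minors_of_eq_mul {R : Type*} [CommRing R] {p r z : Matrix (Fin 2) (Fin 2) R} {e : R}
    (hp : p 0 1 = p 1 0) (hr : r 0 1 = r 1 0) (hz : z 0 1 = z 1 0) (hdet : p.det = 1)
    (h : z = p * !![3, e; -e, 0] * r) :
    p 0 0 * z 0 1 - p 0 1 * z 0 0 = -e * r 0 0 ∧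
    p 0 0 * z 1 1 - p 0 1 * z 0 1 = -e * r 0 1 ∧
    p 0 1 * z 0 1 - p 1 1 * z 0 0 = -3 * r 0 0 - e * r 0 1 ∧
    p 0 1 * z 1 1 - p 1 1 * z 0 1 = -3 * r 0 1 - e * r 1 1 := by
  have key : p.adjugate * z = !![3, e; -e, 0] * r := by
    rw [h, mul_assoc, ← mul_assoc, Matrix.adjugate_mul, hdet, one_smul, one_mul]
  have entry (i j : Fin 2) := congr_fun₂ key i j
  simp only [Matrix.adjugate_fin_two, Matrix.mul_apply, Fin.sum_univ_two, Matrix.of_apply,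
    Matrix.cons_val', Matrix.cons_val_zero, Matrix.cons_val_one, Matrix.cons_val_fin_one,
    Fin.forall_fin_two, ← hp, ← hr, ← hz] at entry
  obtain ⟨⟨h00, h01⟩, h10, h11⟩ := entry
  refine ⟨?_, ?_, ?_, ?_⟩
  · linear_combination h10
  · linear_combination h11
  · linear_combination -h00
  · linear_combination -h01

/-- A real number together with a Markoff sequence of matrices, as one object. The hypotheses start
at `S.x 1`, so the matrix of index `n` in what follows is `S.x (n + 1)`. -/
structure MarkoffSystem where
  ξ : ℝ
  x : ℕ → Matrix (Fin 2) (Fin 2) ℤ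
  isMarkoffSeq : MarkoffSeq ξ x

namespace MarkoffSystem

variable (S : MarkoffSystem)

/-- The entry `x₀` of the `n`-th matrix. -/
def a (n : ℕ) : ℤ := S.x (n + 1) 0 0

/-- The entry `x₁` of the `n`-th matrix. -/
def b (n : ℕ) : ℤ := S.x (n + 1) 0 1

/-- The entry `x₂` of the `n`-th matrix. -/
def c (n : ℕ) : ℤ := S.x (n + 1) 1 1

/-- The maximum norm of the `n`-th matrix, the scale against which all errors are measured. -/
noncomputable def X (n : ℕ) : ℝ := Xnorm S.x (n + 1)

/-- The off-diagonal sign of `Mmat (n + 1)`, kept as an integer so that it can multiply classes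
modulo `1`. -/
def s (n : ℕ) : ℤ := (-1) ^ (n + 1)

theorem x_symm (n : ℕ) : S.x (n + 1) 0 1 = S.x (n + 1) 1 0 := S.isMarkoffSeq.1 _ n.succ_pos

theorem x_eq (n : ℕ) : S.x (n + 1) = !![S.a n, S.b n; S.b n, S.c n] := by
  rw [b, Matrix.eta_fin_two (S.x (n + 1)), ← x_symm]
  rfl

theorem Mmat_eq (n : ℕ) : Mmat (n + 1) = !![3, s n; -s n, 0] := by
  simp only [Mmat, s, pow_succ _ (n + 1), mul_neg_one]

theorem det_x (n : ℕ) : (S.x (n + 1)).det = 1 := S.isMarkoffSeq.2.1 _ n.succ_pos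

theorem x_add_two_left (n : ℕ) : S.x (n + 3) = S.x (n + 2) * Mmat (n + 2) * S.x (n + 1) := by
  obtain ⟨-, -, _, _, _, -, -, -, h⟩ := S.isMarkoffSeq
  exact (h (n + 1) n.succ_pos).2.2.1.1

theorem x_add_two_right (n : ℕ) : S.x (n + 3) = S.x (n + 1) * Mmat (n + 1) * S.x (n + 2) := by
  obtain ⟨-, -, _, _, _, -, -, -, h⟩ := S.isMarkoffSeq
  exact (h (n + 1) n.succ_pos).2.2.1.2

theorem X_lt_succ (n : ℕ) : S.X n < S.X (n + 1) := by
  obtain ⟨-, -, _, _, _, -, -, -, h⟩ := S.isMarkoffSeq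
  exact (h (n + 1) n.succ_pos).2.2.2.1

theorem X_lt_mul_abs_a (n : ℕ) : S.X n < (1 + S.ξ ^ 2) * |(S.a n : ℝ)| := by
  obtain ⟨-, -, _, _, _, -, -, -, h⟩ := S.isMarkoffSeq
  exact (h (n + 1) n.succ_pos).2.2.2.2

theorem abs_a_le (n : ℕ) : |(S.a n : ℝ)| ≤ S.X n := le_max_left _ _

theorem abs_b_le (n : ℕ) : |(S.b n : ℝ)| ≤ S.X n := (le_max_left _ _).trans (le_max_right _ _)

theorem abs_c_le (n : ℕ) : |(S.c n : ℝ)| ≤ S.X n := (le_max_right _ _).trans (le_max_right _ _)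

theorem a_ne_zero (n : ℕ) : S.a n ≠ 0 := by
  intro h
  have hlt := S.X_lt_mul_abs_a n
  have hle := S.abs_a_le n
  simp only [h, Int.cast_zero, abs_zero, mul_zero] at hlt hle
  exact hlt.not_ge hle

theorem one_le_X (n : ℕ) : 1 ≤ S.X n :=
  le_trans (mod_cast Int.one_le_abs (S.a_ne_zero n)) (S.abs_a_le n)

theorem tendsto_X_atTop : Tendsto S.X atTop atTop := by
  let N (n : ℕ) : ℕ := max (S.a n).natAbs (max (S.b n).natAbs (S.c n).natAbs)
  have hN : S.X = fun n => (N n : ℝ) := by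
    ext n
    simp [X, Xnorm, N, a, b, c, Nat.cast_natAbs]
  rw [hN, tendsto_natCast_atTop_iff]
  refine (strictMono_nat_of_lt_succ fun n => ?_).tendsto_atTop
  have := S.X_lt_succ n
  simp only [hN] at this
  exact_mod_cast this

theorem isTheta_X_succ :
    (fun n => S.X (n + 1)) =Θ[atTop] fun n => S.X n ^ Real.goldenRatio := by
  obtain ⟨-, -, c₁, c₂, c₃, hc₁, -, -, h⟩ := S.isMarkoffSeq
  have hX (n : ℕ) : 0 ≤ S.X n := zero_le_one.trans (S.one_le_X n)
  have hrpow (n : ℕ) : 0 ≤ S.X n ^ Real.goldenRatio := Real.rpow_nonneg (hX n) _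
  refine ⟨.of_bound c₂ (.of_forall fun n => ?_), .of_bound c₁⁻¹ (.of_forall fun n => ?_)⟩ <;>
    rw [Real.norm_of_nonneg (hX _), Real.norm_of_nonneg (hrpow _)]
  · exact (h (n + 1) n.succ_pos).1.2
  · rw [inv_mul_eq_div, le_div_iff₀' hc₁]
    exact (h (n + 1) n.succ_pos).1.1

instance : FibonacciGrowth S.X :=
  .of_isTheta_rpow_goldenRatio S.one_le_X (monotone_nat_of_le_succ fun n => (S.X_lt_succ n).le)
    S.tendsto_X_atTop S.isTheta_X_succ

theorem s_sq (n : ℕ) : (s n : ℝ) ^ 2 = 1 := by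
  rw [s, Int.cast_pow, ← pow_mul, mul_comm, pow_mul]
  norm_num

theorem s_succ (n : ℕ) : (s (n + 1) : ℝ) = -s n := by
  simp only [s, pow_succ]
  push_cast
  ring

theorem s_add_two (n : ℕ) : (s (n + 2) : ℝ) = s n := by
  rw [s_succ, s_succ, neg_neg]

theorem s_add_three (n : ℕ) : (s (n + 3) : ℝ) = -s n := by
  rw [s_succ, s_add_two]

theorem s_add_six (n : ℕ) : (s (n + 6) : ℝ) = s n := by
  rw [s_add_three, s_add_three, neg_neg]

theorem ac_sub_sq_b (n : ℕ) : (S.a n * S.c n - S.b n ^ 2 : ℝ) = 1 := by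
  have h := S.det_x n
  rw [x_eq, Matrix.det_fin_two_of, ← pow_two] at h
  exact_mod_cast h

theorem minors_add_two (n : ℕ) :
    S.a n * S.b (n + 2) - S.b n * S.a (n + 2) = -s n * S.a (n + 1) ∧
    S.a n * S.c (n + 2) - S.b n * S.b (n + 2) = -s n * S.b (n + 1) ∧
    S.b n * S.b (n + 2) - S.c n * S.a (n + 2) = -3 * S.a (n + 1) - s n * S.b (n + 1) ∧
    S.b n * S.c (n + 2) - S.c n * S.b (n + 2) = -3 * S.b (n + 1) - s n * S.c (n + 1) :=
  minors_of_eq_mul (S.x_symm n) (S.x_symm (n + 1)) (S.x_symm (n + 2)) (S.det_x n)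
    (Mmat_eq n ▸ S.x_add_two_right n)

theorem minors_succ (n : ℕ) :
    S.a (n + 1) * S.b (n + 2) - S.b (n + 1) * S.a (n + 2) = -s (n + 1) * S.a n ∧
    S.a (n + 1) * S.c (n + 2) - S.b (n + 1) * S.b (n + 2) = -s (n + 1) * S.b n ∧
    S.b (n + 1) * S.b (n + 2) - S.c (n + 1) * S.a (n + 2) = -3 * S.a n - s (n + 1) * S.b n ∧
    S.b (n + 1) * S.c (n + 2) - S.c (n + 1) * S.b (n + 2) = -3 * S.b n - s (n + 1) * S.c n :=
  minors_of_eq_mul (S.x_symm (n + 1)) (S.x_symm n) (S.x_symm (n + 2)) (S.det_x (n + 1))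
    (Mmat_eq (n + 1) ▸ S.x_add_two_left n)

theorem ab_sub_ba_add_two (n : ℕ) :
    (S.a n * S.b (n + 2) - S.b n * S.a (n + 2) : ℝ) = -s n * S.a (n + 1) :=
  mod_cast (S.minors_add_two n).1

theorem ac_sub_bb_add_two (n : ℕ) :
    (S.a n * S.c (n + 2) - S.b n * S.b (n + 2) : ℝ) = -s n * S.b (n + 1) :=
  mod_cast (S.minors_add_two n).2.1

theorem bb_sub_ca_add_two (n : ℕ) :
    (S.b n * S.b (n + 2) - S.c n * S.a (n + 2) : ℝ) = -3 * S.a (n + 1) - s n * S.b (n + 1) :=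
  mod_cast (S.minors_add_two n).2.2.1

theorem bc_sub_cb_add_two (n : ℕ) :
    (S.b n * S.c (n + 2) - S.c n * S.b (n + 2) : ℝ) = -3 * S.b (n + 1) - s n * S.c (n + 1) :=
  mod_cast (S.minors_add_two n).2.2.2

theorem ab_sub_ba_succ (n : ℕ) :
    (S.a (n + 1) * S.b (n + 2) - S.b (n + 1) * S.a (n + 2) : ℝ) = s n * S.a n := by
  have h := congrArg (Int.cast : ℤ → ℝ) (S.minors_succ n).1
  push_cast [s_succ] at h
  linear_combination h

theorem ac_sub_bb_succ (n : ℕ) :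
    (S.a (n + 1) * S.c (n + 2) - S.b (n + 1) * S.b (n + 2) : ℝ) = s n * S.b n := by
  have h := congrArg (Int.cast : ℤ → ℝ) (S.minors_succ n).2.1
  push_cast [s_succ] at h
  linear_combination h

theorem bb_sub_ca_succ (n : ℕ) :
    (S.b (n + 1) * S.b (n + 2) - S.c (n + 1) * S.a (n + 2) : ℝ) = -3 * S.a n + s n * S.b n := by
  have h := congrArg (Int.cast : ℤ → ℝ) (S.minors_succ n).2.2.1
  push_cast [s_succ] at h
  linear_combination h

theorem bc_sub_cb_succ (n : ℕ) :
    (S.b (n + 1) * S.c (n + 2) - S.c (n + 1) * S.b (n + 2) : ℝ) = -3 * S.b n + s n * S.c n := by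
  have h := congrArg (Int.cast : ℤ → ℝ) (S.minors_succ n).2.2.2
  push_cast [s_succ] at h
  linear_combination h

theorem x_add_three (n : ℕ) : S.x (n + 4) + S.x (n + 1) = (3 * S.a (n + 1)) • S.x (n + 3) := by
  have hdet : (S.x (n + 2) * Mmat (n + 2)).det = 1 := by
    rw [Matrix.det_mul, det_x, one_mul, Mmat_eq, Matrix.det_fin_two_of]
    have h := s_sq (n + 1)
    norm_cast at h
    linear_combination h
  have htrace : (S.x (n + 2) * Mmat (n + 2)).trace = 3 * S.a (n + 1) := by
    rw [x_eq, Mmat_eq, Matrix.mul_fin_two, Matrix.trace_fin_two_of]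
    ring
  calc S.x (n + 4) + S.x (n + 1)
      = (S.x (n + 2) * Mmat (n + 2) * (S.x (n + 2) * Mmat (n + 2)) + 1) * S.x (n + 1) := by
        rw [S.x_add_two_right (n + 1), S.x_add_two_left n, add_mul, one_mul]
        simp only [mul_assoc]
    _ = (3 * S.a (n + 1)) • S.x (n + 3) := by
        rw [mul_self_add_one_of_det_eq_one hdet, htrace, x_add_two_left, smul_mul_assoc]

theorem a_add_three (n : ℕ) : (S.a (n + 3) + S.a n : ℝ) = 3 * S.a (n + 1) * S.a (n + 2) :=
  mod_cast congr_fun₂ (S.x_add_three n) 0 0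

theorem b_add_three (n : ℕ) : (S.b (n + 3) + S.b n : ℝ) = 3 * S.a (n + 1) * S.b (n + 2) :=
  mod_cast congr_fun₂ (S.x_add_three n) 0 1

theorem c_add_three (n : ℕ) : (S.c (n + 3) + S.c n : ℝ) = 3 * S.a (n + 1) * S.c (n + 2) :=
  mod_cast congr_fun₂ (S.x_add_three n) 1 1

theorem ab_sub_ba_add_three (n : ℕ) :
    (S.a n * S.b (n + 3) - S.b n * S.a (n + 3) : ℝ) = -3 * s n * S.a (n + 1) ^ 2 := by
  linear_combination S.a n * S.b_add_three n - S.b n * S.a_add_three n +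
    3 * S.a (n + 1) * S.ab_sub_ba_add_two n

theorem ac_sub_bb_add_three (n : ℕ) :
    (S.a n * S.c (n + 3) - S.b n * S.b (n + 3) : ℝ) =
      -3 * s n * S.a (n + 1) * S.b (n + 1) - 1 := by
  linear_combination S.a n * S.c_add_three n - S.b n * S.b_add_three n +
    3 * S.a (n + 1) * S.ac_sub_bb_add_two n - S.ac_sub_sq_b n

theorem bc_sub_cb_add_three (n : ℕ) :
    (S.b n * S.c (n + 3) - S.c n * S.b (n + 3) : ℝ) =
      3 * S.a (n + 1) * (-3 * S.b (n + 1) - s n * S.c (n + 1)) := by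
  linear_combination S.b n * S.c_add_three n - S.c n * S.b_add_three n +
    3 * S.a (n + 1) * S.bc_sub_cb_add_two n

theorem a_add_two (n : ℕ) : (S.a (n + 2) : ℝ) =
    3 * S.a n * S.a (n + 1) + s n * (S.b (n + 1) * S.a n - S.a (n + 1) * S.b n) := by
  have h : S.a (n + 2) = (S.a n * 3 + S.b n * -s n) * S.a (n + 1) +
      (S.a n * s n + S.b n * 0) * S.b (n + 1) := by
    rw [a, x_add_two_right, x_eq, x_eq, Mmat_eq, Matrix.mul_fin_two, Matrix.mul_fin_two]
    rfl
  rw [h]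
  push_cast
  ring

theorem markoff_equation (n : ℕ) : (S.a n ^ 2 + S.a (n + 1) ^ 2 + S.a (n + 2) ^ 2 : ℝ) =
    3 * S.a n * S.a (n + 1) * S.a (n + 2) := by
  linear_combination (-s n * S.a n : ℝ) * S.ab_sub_ba_succ n +
    s n * S.a (n + 1) * S.ab_sub_ba_add_two n + S.a (n + 2) * S.a_add_two n -
    (S.a n ^ 2 + S.a (n + 1) ^ 2) * s_sq n

/-- The error of `b / a` as an approximation of `ξ`, multiplied by `a`. -/
noncomputable def α (n : ℕ) : ℝ := S.a n * S.ξ - S.b n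

/-- The error of `c / b` as an approximation of `ξ`, multiplied by `b`. -/
noncomputable def β (n : ℕ) : ℝ := S.b n * S.ξ - S.c n

/-- The error of `c / a` as an approximation of `ξ ^ 2`, multiplied by `a`. -/
noncomputable def η (n : ℕ) : ℝ := S.a n * S.ξ ^ 2 - S.c n

theorem isBigO_α : S.α =O[atTop] fun n => (S.X n)⁻¹ := by
  obtain ⟨-, -, _, _, c₃, -, -, -, h⟩ := S.isMarkoffSeq
  refine .of_bound c₃ (.of_forall fun n => ?_)
  rw [norm_inv, Real.norm_of_nonneg (FibonacciGrowth.pos S.X n).le, ← div_eq_mul_inv]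
  exact (h (n + 1) n.succ_pos).2.1.1

theorem isBigO_β : S.β =O[atTop] fun n => (S.X n)⁻¹ := by
  obtain ⟨-, -, _, _, c₃, -, -, -, h⟩ := S.isMarkoffSeq
  refine .of_bound c₃ (.of_forall fun n => ?_)
  rw [norm_inv, Real.norm_of_nonneg (FibonacciGrowth.pos S.X n).le, ← div_eq_mul_inv]
  exact (h (n + 1) n.succ_pos).2.1.2

theorem isBigO_inv_a : (fun n => (S.a n : ℝ)⁻¹) =O[atTop] fun n => (S.X n)⁻¹ := by
  refine .of_bound (1 + S.ξ ^ 2) (.of_forall fun n => ?_)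
  have ha : 0 < |(S.a n : ℝ)| := abs_pos.2 (mod_cast S.a_ne_zero n)
  have hX := FibonacciGrowth.pos S.X n
  rw [norm_inv, norm_inv, Real.norm_of_nonneg hX.le, Real.norm_eq_abs, ← div_eq_mul_inv,
    inv_le_iff_one_le_mul₀ ha, div_mul_eq_mul_div, one_le_div hX]
  exact (S.X_lt_mul_abs_a n).le

theorem η_eq (n : ℕ) : S.η n = S.ξ * S.α n + S.β n := by
  simp only [η, α, β]
  ring

theorem a_mul_β_eq (n : ℕ) : S.a n * S.β n = S.a n * S.ξ * S.α n - S.α n ^ 2 - 1 := by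
  simp only [α, β]
  linear_combination -S.ac_sub_sq_b n

variable {S}

theorem ofOrder_a (j : ℕ) : OfOrder S.X (goldMul^[j] (1, 0)) fun n => (S.a (n + j) : ℝ) :=
  (OfOrder.of_isBigO_self (.of_norm_le S.abs_a_le)).shift_iterate j

theorem ofOrder_b (j : ℕ) : OfOrder S.X (goldMul^[j] (1, 0)) fun n => (S.b (n + j) : ℝ) :=
  (OfOrder.of_isBigO_self (.of_norm_le S.abs_b_le)).shift_iterate j

theorem ofOrder_c (j : ℕ) : OfOrder S.X (goldMul^[j] (1, 0)) fun n => (S.c (n + j) : ℝ) :=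
  (OfOrder.of_isBigO_self (.of_norm_le S.abs_c_le)).shift_iterate j

theorem ofOrder_inv_a (j : ℕ) :
    OfOrder S.X (goldMul^[j] (-1, 0)) fun n => (S.a (n + j) : ℝ)⁻¹ :=
  (OfOrder.of_isBigO_inv S.isBigO_inv_a).shift_iterate j

theorem ofOrder_inv_X (j : ℕ) : OfOrder S.X (goldMul^[j] (-1, 0)) fun n => (S.X (n + j))⁻¹ :=
  (OfOrder.of_isBigO_inv (isBigO_refl (fun n => (S.X n)⁻¹) atTop)).shift_iterate j

theorem ofOrder_α (j : ℕ) : OfOrder S.X (goldMul^[j] (-1, 0)) fun n => S.α (n + j) :=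
  (OfOrder.of_isBigO_inv S.isBigO_α).shift_iterate j

theorem ofOrder_β (j : ℕ) : OfOrder S.X (goldMul^[j] (-1, 0)) fun n => S.β (n + j) :=
  (OfOrder.of_isBigO_inv S.isBigO_β).shift_iterate j

theorem ofOrder_η (j : ℕ) : OfOrder S.X (goldMul^[j] (-1, 0)) fun n => S.η (n + j) :=
  (((ofOrder_α 0).const_mul S.ξ).add (ofOrder_β 0) |>.congr S.η_eq).shift_iterate j

theorem ofOrder_const (X : ℕ → ℝ) (r : ℝ) : OfOrder X (0, 0) fun _ => r :=
  (isBigO_const_const r (one_ne_zero (α := ℝ)) atTop).congr_right fun n => by simp [growthScale]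

theorem norm_s (n : ℕ) : ‖(s n : ℝ)‖ = 1 := by
  simp [s]

theorem ofOrder_s : OfOrder S.X (0, 0) fun n => (s n : ℝ) :=
  (isBigO_of_le _ fun n => by rw [norm_s, norm_one]).trans (ofOrder_const S.X 1)

theorem _root_.NearInt.s_mul {e : ℤ × ℤ} {f : ℕ → ℝ} (h : NearInt S.X e f) :
    NearInt S.X e fun n => s n * f n :=
  zero_add e ▸ h.int_mul ofOrder_s

theorem ofOrder_three_mul_aα_succ :
    OfOrder S.X (-2, 0) fun n => 3 * S.a (n + 1) * S.α (n + 1) - s n := by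
  have hα : OfOrder S.X (-2, 0) fun n =>
      3 * (S.a (n + 1) * S.a (n + 1) * S.α (n + 2) * (S.a (n + 2) : ℝ)⁻¹) :=
    (((((ofOrder_a 1).mul (ofOrder_a 1)).mul (ofOrder_α 2)).mul (ofOrder_inv_a 2)).const_mul 3).mono
  have hsq : OfOrder S.X (0, 2) fun n => (S.a n * S.a n + S.a (n + 1) * S.a (n + 1) : ℝ) :=
    ((ofOrder_a 0).mul (ofOrder_a 0)).mono.add ((ofOrder_a 1).mul (ofOrder_a 1)).mono
  refine (hα.add (ofOrder_s.mul
    (hsq.mul ((ofOrder_inv_a 2).mul (ofOrder_inv_a 2)))).mono).congr fun n => ?_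
  have ha := S.a_ne_zero (n + 2)
  simp only [α]
  field_simp
  linear_combination 3 * S.a (n + 1) * S.a (n + 2) * S.ab_sub_ba_succ n -
    s n * S.markoff_equation n

theorem ofOrder_three_mul_aβ_succ :
    OfOrder S.X (-2, 0) fun n => 3 * S.a (n + 1) * S.β (n + 1) - s n * S.ξ + 3 := by
  refine ((ofOrder_three_mul_aα_succ.const_mul S.ξ).sub
    (((ofOrder_α 1).mul (ofOrder_α 1)).const_mul 3).mono).congr fun n => ?_
  linear_combination 3 * S.a_mul_β_eq (n + 1)

theorem ofOrder_three_mul_aη_succ :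
    OfOrder S.X (-2, 0) fun n => 3 * S.a (n + 1) * S.η (n + 1) - 2 * s n * S.ξ + 3 := by
  refine ((ofOrder_three_mul_aα_succ.const_mul (2 * S.ξ)).sub
    (((ofOrder_α 1).mul (ofOrder_α 1)).const_mul 3).mono).congr fun n => ?_
  linear_combination 3 * S.a_mul_β_eq (n + 1) + 3 * S.a (n + 1) * S.η_eq (n + 1)

theorem ofOrder_three_mul_aα_add_two :
    OfOrder S.X (0, -2) fun n => 3 * S.a (n + 2) * S.α (n + 2) + s n :=
  ofOrder_three_mul_aα_succ.shift.congr fun n => by rw [s_succ]; ring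

theorem ofOrder_three_mul_aβ_add_three :
    OfOrder S.X (-2, -2) fun n => 3 * S.a (n + 3) * S.β (n + 3) - s n * S.ξ + 3 :=
  ofOrder_three_mul_aβ_succ.shift.shift.congr fun n => by rw [s_succ, s_succ]; ring

theorem ofOrder_three_mul_aβ_add_four :
    OfOrder S.X (-2, -4) fun n => 3 * S.a (n + 4) * S.β (n + 4) + s n * S.ξ + 3 :=
  ofOrder_three_mul_aβ_add_three.shift.congr fun n => by rw [s_succ]; ring

theorem ofOrder_three_mul_aη_add_four :
    OfOrder S.X (-2, -4) fun n => 3 * S.a (n + 4) * S.η (n + 4) + 2 * s n * S.ξ + 3 :=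
  ofOrder_three_mul_aη_succ.shift.shift.shift.congr fun n => by
    rw [s_succ, s_succ, s_succ]; ring

/-! ### Products of two consecutive terms -/

theorem nearInt_aa_succ_ξ_pow_three :
    NearInt S.X (-1, 0) fun n => S.a (n + 1) * S.a (n + 2) * S.ξ ^ 3 := by
  refine NearInt.of_eq_int_add (fun n => S.b (n + 1) * S.c (n + 2) + s n * S.c n)
    ((((ofOrder_b 1).mul (ofOrder_η 2)).mono.add
      (((ofOrder_a 1).mul (ofOrder_α 2)).const_mul (S.ξ ^ 2)).mono).add
      (ofOrder_s.mul (ofOrder_η 0)).mono) fun n => ?_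
  simp only [α, η, add_zero]
  push_cast
  linear_combination S.ξ ^ 2 * S.ab_sub_ba_succ n

theorem ofOrder_aa_succ_sub_cc_succ :
    OfOrder S.X (-1, 0) fun n => S.a (n + 1) * S.a (n + 2) * S.ξ ^ 4 -
      S.c (n + 1) * S.c (n + 2) - 2 * s n * S.a n * S.ξ ^ 3 + 3 * S.a n * S.ξ ^ 2 := by
  refine (((((ofOrder_c 1).mul (ofOrder_η 2)).const_mul 2).mono.add
    ((ofOrder_η 1).mul (ofOrder_η 2)).mono).sub
    ((ofOrder_s.mul (ofOrder_α 0)).const_mul (2 * S.ξ ^ 2)).mono).congr fun n => ?_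
  simp only [α, η, add_zero]
  linear_combination S.ξ ^ 2 * S.ac_sub_bb_succ n + S.ξ ^ 2 * S.bb_sub_ca_succ n

theorem nearInt_aa_succ_ξ_pow_four :
    NearInt S.X (-1, 0) fun n => S.a (n + 1) * S.a (n + 2) * S.ξ ^ 4 -
      2 * s n * S.a n * S.ξ ^ 3 := by
  refine NearInt.of_eq_int_add (fun n => S.c (n + 1) * S.c (n + 2) - 3 * S.c n)
    (ofOrder_aa_succ_sub_cc_succ.sub ((ofOrder_η 0).const_mul 3).mono) fun n => ?_
  simp only [η, add_zero]
  push_cast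
  ring

theorem nearInt_aa_succ_ξ_pow_five :
    NearInt S.X (-1, 0) fun n => S.a (n + 1) * S.a (n + 2) * S.ξ ^ 5 -
      S.c (n + 1) * S.c (n + 2) * S.ξ - 2 * s n * S.a n * S.ξ ^ 4 + 3 * S.a n * S.ξ ^ 3 :=
  NearInt.of_ofOrder ((ofOrder_aa_succ_sub_cc_succ.const_mul S.ξ).congr fun n => by ring)

theorem nearInt_aa_succ_ξ_pow_six :
    NearInt S.X (-1, 0) fun n => S.a (n + 1) * S.a (n + 2) * S.ξ ^ 6 -
      S.c (n + 1) * S.c (n + 2) * S.ξ ^ 2 - 2 * s n * S.a n * S.ξ ^ 5 + 3 * S.a n * S.ξ ^ 4 :=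
  NearInt.of_ofOrder ((ofOrder_aa_succ_sub_cc_succ.const_mul (S.ξ ^ 2)).congr fun n => by ring)

theorem nearInt_a_add_three_ξ_pow_three :
    NearInt S.X (-1, 0) fun n => (S.a (n + 3) + S.a n) * S.ξ ^ 3 :=
  (nearInt_aa_succ_ξ_pow_three.const_mul 3).congr fun n => by
    push_cast
    linear_combination S.ξ ^ 3 * S.a_add_three n

theorem nearInt_a_add_three_ξ_pow_four :
    NearInt S.X (-1, 0) fun n => (S.a (n + 3) + S.a n) * S.ξ ^ 4 - 6 * s n * S.a n * S.ξ ^ 3 :=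
  (nearInt_aa_succ_ξ_pow_four.const_mul 3).congr fun n => by
    push_cast
    linear_combination S.ξ ^ 4 * S.a_add_three n

theorem nearInt_a_add_three_ξ_pow_five :
    NearInt S.X (-1, 0) fun n => (S.a (n + 3) + S.a n) * S.ξ ^ 5 -
      3 * S.c (n + 1) * S.c (n + 2) * S.ξ - 6 * s n * S.a n * S.ξ ^ 4 + 9 * S.a n * S.ξ ^ 3 :=
  (nearInt_aa_succ_ξ_pow_five.const_mul 3).congr fun n => by
    push_cast
    linear_combination S.ξ ^ 5 * S.a_add_three n

theorem nearInt_a_add_three_ξ_pow_six :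
    NearInt S.X (-1, 0) fun n => (S.a (n + 3) + S.a n) * S.ξ ^ 6 -
      3 * S.c (n + 1) * S.c (n + 2) * S.ξ ^ 2 - 6 * s n * S.a n * S.ξ ^ 5 + 9 * S.a n * S.ξ ^ 4 :=
  (nearInt_aa_succ_ξ_pow_six.const_mul 3).congr fun n => by
    push_cast
    linear_combination S.ξ ^ 6 * S.a_add_three n

/-! ### The products `c (n + 1) * c (n + 2)` along steps of length three -/

theorem ofOrder_mul_β_of_sub_mul_sq {Q : ℕ → ℝ} (κ : ℝ)
    (h : OfOrder S.X (0, 0) fun n => Q n - κ * S.a (n + 2) ^ 2) :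
    OfOrder S.X (-1, 0) fun n => 3 * Q n * S.β (n + 3) - κ * S.a n * (s n * S.ξ - 3) := by
  have hsq : OfOrder S.X (2, 2) fun n => (S.a (n + 2) : ℝ) ^ 2 :=
    ((ofOrder_a 2).mul (ofOrder_a 2)).mono.congr fun n => pow_two _
  have hsq' : OfOrder S.X (0, 2) fun n => (S.a (n + 1) : ℝ) ^ 2 :=
    ((ofOrder_a 1).mul (ofOrder_a 1)).mono.congr fun n => pow_two _
  have hQ : OfOrder S.X (2, 2) Q := (h.mono.add (hsq.const_mul κ)).congr fun n => by ring
  have hs : OfOrder S.X (0, 0) fun n => s n * S.ξ - 3 :=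
    ((ofOrder_s.const_mul S.ξ).sub (ofOrder_const S.X 3)).congr fun n => by ring
  refine (((hQ.mul (ofOrder_inv_a 3)).mul ofOrder_three_mul_aβ_add_three).mono.add
    ((hs.mul (ofOrder_inv_a 3)).mul ((h.mono (e' := (0, 2))).sub (hsq'.const_mul κ))).mono).congr
    fun n => ?_
  have ha := S.a_ne_zero (n + 3)
  field_simp
  linear_combination κ * (s n * S.ξ - 3) * S.markoff_equation n -
    κ * (s n * S.ξ - 3) * S.a n * S.a_add_three n

theorem ofOrder_bc_mul_β_succ :
    OfOrder S.X (-1, 0) fun n => 3 * (S.b (n + 2) * S.c (n + 2)) * S.β (n + 3) -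
      s n * S.a n * S.ξ ^ 4 + 3 * S.a n * S.ξ ^ 3 := by
  refine (ofOrder_mul_β_of_sub_mul_sq (Q := fun n => S.b (n + 2) * S.c (n + 2)) (S.ξ ^ 3)
    (((((ofOrder_α 2).mul (ofOrder_η 2)).mono.sub
      (((ofOrder_a 2).mul (ofOrder_η 2)).const_mul S.ξ).mono).sub
      (((ofOrder_a 2).mul (ofOrder_α 2)).const_mul (S.ξ ^ 2)).mono).congr fun n => ?_)).congr
    fun n => by ring
  simp only [α, η]
  ring

theorem ofOrder_cc_add_bcξ_mul_β_succ :
    OfOrder S.X (-1, 0) fun n =>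
      3 * (S.c (n + 2) * (S.c (n + 2) + S.b (n + 2) * S.ξ)) * S.β (n + 3) -
      2 * s n * S.a n * S.ξ ^ 5 + 6 * S.a n * S.ξ ^ 4 := by
  have hδ : OfOrder S.X (-1, -1) fun n => S.η (n + 2) + S.ξ * S.α (n + 2) :=
    (ofOrder_η 2).mono.add ((ofOrder_α 2).const_mul S.ξ).mono
  refine (ofOrder_mul_β_of_sub_mul_sq
    (Q := fun n => S.c (n + 2) * (S.c (n + 2) + S.b (n + 2) * S.ξ)) (2 * S.ξ ^ 4)
    (((((ofOrder_η 2).mul hδ).mono.sub (((ofOrder_a 2).mul hδ).const_mul (S.ξ ^ 2)).mono).sub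
      (((ofOrder_a 2).mul (ofOrder_η 2)).const_mul (2 * S.ξ ^ 2)).mono).congr fun n => ?_)).congr
    fun n => by ring
  simp only [α, η]
  ring

theorem ofOrder_bc_succ_mul_β :
    OfOrder S.X (-1, 0) fun n => 3 * (S.b (n + 3) * S.c (n + 4)) * S.β (n + 4) +
      s n * S.a (n + 3) * S.ξ ^ 4 + 3 * S.a (n + 3) * S.ξ ^ 3 := by
  have h : OfOrder S.X (-2, -4) fun n => 3 * S.c (n + 4) * S.β (n + 4) +
      S.ξ ^ 2 * (s n * S.ξ + 3) :=
    ((ofOrder_three_mul_aβ_add_four.const_mul (S.ξ ^ 2)).sub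
      (((ofOrder_η 4).mul (ofOrder_β 4)).const_mul 3).mono).congr fun n => by simp only [η]; ring
  have hs : OfOrder S.X (0, 0) fun n => s n * S.ξ + 3 :=
    ((ofOrder_s.const_mul S.ξ).add (ofOrder_const S.X 3)).congr fun n => by ring
  refine (((ofOrder_b 3).mul h).mono.add (((ofOrder_α 3).mul hs).const_mul (S.ξ ^ 2)).mono).congr
    fun n => ?_
  simp only [α]
  ring

theorem ofOrder_cc_succ_mul_η :
    OfOrder S.X (-1, 0) fun n => 3 * (S.c (n + 3) * S.c (n + 4)) * S.η (n + 4) +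
      2 * s n * S.a (n + 3) * S.ξ ^ 5 + 3 * S.a (n + 3) * S.ξ ^ 4 := by
  have h : OfOrder S.X (-2, -4) fun n => 3 * S.c (n + 4) * S.η (n + 4) +
      S.ξ ^ 2 * (2 * s n * S.ξ + 3) :=
    ((ofOrder_three_mul_aη_add_four.const_mul (S.ξ ^ 2)).sub
      (((ofOrder_η 4).mul (ofOrder_η 4)).const_mul 3).mono).congr fun n => by simp only [η]; ring
  have hs : OfOrder S.X (0, 0) fun n => 2 * s n * S.ξ + 3 :=
    ((ofOrder_s.const_mul (2 * S.ξ)).add (ofOrder_const S.X 3)).congr fun n => by ring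
  refine (((ofOrder_c 3).mul h).mono.add (((ofOrder_η 3).mul hs).const_mul (S.ξ ^ 2)).mono).congr
    fun n => ?_
  simp only [η]
  ring

theorem bc_sub_cb_succ_succ (n : ℕ) :
    (S.b (n + 2) * S.c (n + 3) - S.c (n + 2) * S.b (n + 3) : ℝ) =
      -3 * S.b (n + 1) - s n * S.c (n + 1) := by
  linear_combination S.bc_sub_cb_succ (n + 1) + S.c (n + 1) * s_succ n

theorem ofOrder_neg_three_b_sub_sc :
    OfOrder S.X (0, 1) fun n => -3 * S.b (n + 1) - s n * S.c (n + 1) :=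
  ((ofOrder_b 1).const_mul (-3)).mono.sub (ofOrder_s.mul (ofOrder_c 1)).mono

theorem nearInt_acc_succ_ξ :
    NearInt S.X (-1, 0) fun n => S.a (n + 2) * S.c (n + 2) * S.c (n + 3) * S.ξ -
      S.a (n + 3) * S.ξ ^ 3 - S.b (n + 2) * S.c (n + 2) * S.β (n + 3) := by
  refine NearInt.of_eq_int_add (fun n => S.b (n + 2) * S.c (n + 2) * S.c (n + 3) +
      (-3 * S.b (n + 1) - s n * S.c (n + 1)) * S.c (n + 2))
    ((ofOrder_neg_three_b_sub_sc.mul (ofOrder_β 2)).mono.sub ((ofOrder_η 3).const_mul S.ξ).mono)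
    fun n => ?_
  simp only [β, η]
  push_cast
  linear_combination S.c (n + 3) * S.ξ * S.ac_sub_sq_b (n + 2) +
    S.b (n + 2) * S.ξ * S.bc_sub_cb_succ_succ n

theorem nearInt_acc_succ_ξ_sq :
    NearInt S.X (-1, 0) fun n => S.a (n + 2) * S.c (n + 2) * S.c (n + 3) * S.ξ ^ 2 -
      S.a (n + 3) * S.ξ ^ 4 - S.c (n + 2) * (S.c (n + 2) + S.b (n + 2) * S.ξ) * S.β (n + 3) +
      2 * s n * S.c (n + 1) * S.c (n + 2) * S.ξ + 6 * s n * S.a n * S.ξ ^ 3 := by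
  refine NearInt.of_eq_int_add (fun n => S.c (n + 2) ^ 2 * S.c (n + 3) -
      6 * S.c (n + 1) * S.c (n + 2) + 18 * S.c n)
    ((((((ofOrder_neg_three_b_sub_sc.mul (ofOrder_β 2)).const_mul S.ξ).mono.sub
      ((ofOrder_η 3).const_mul (S.ξ ^ 2)).mono).sub
      (((ofOrder_c 1).mul (ofOrder_β 2)).const_mul 6).mono).add
      ((ofOrder_β 0).const_mul 18).mono).add
      ((ofOrder_s.mul (ofOrder_η 0)).const_mul (6 * S.ξ)).mono)
    fun n => ?_
  simp only [β, η, add_zero]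
  push_cast
  linear_combination S.c (n + 3) * S.ξ ^ 2 * S.ac_sub_sq_b (n + 2) +
    (S.c (n + 2) + S.b (n + 2) * S.ξ) * S.ξ * S.bc_sub_cb_succ_succ n - 6 * S.ξ * S.bc_sub_cb_succ n

theorem nearInt_ac_sq_succ_ξ :
    NearInt S.X (-1, 0) fun n => S.a (n + 3) * S.c (n + 4) ^ 2 * S.ξ + S.a (n + 3) * S.ξ ^ 3 -
      S.b (n + 3) * S.c (n + 4) * S.β (n + 4) := by
  refine NearInt.of_eq_int_add (fun n => S.b (n + 3) * S.c (n + 4) ^ 2 +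
      s n * S.c (n + 2) * S.c (n + 4) - 3 * s n * S.c (n + 3))
    (((ofOrder_s.mul ((ofOrder_c 2).mul (ofOrder_β 4))).mono.sub
      ((ofOrder_s.mul (ofOrder_β 3)).const_mul 3).mono).add
      ((ofOrder_η 3).const_mul S.ξ).mono) fun n => ?_
  simp only [β, η]
  push_cast
  linear_combination S.c (n + 4) * S.ξ * S.ac_sub_bb_succ (n + 2) +
    s n * S.ξ * S.bc_sub_cb_add_two (n + 2) - S.c (n + 3) * S.ξ * s_sq n +
    (S.c (n + 4) * S.ξ * S.b (n + 2) - s n * S.ξ * S.c (n + 3)) * s_add_two n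

theorem nearInt_ac_sq_succ_ξ_sq :
    NearInt S.X (-1, 0) fun n => S.a (n + 3) * S.c (n + 4) ^ 2 * S.ξ ^ 2 +
      2 * S.a (n + 3) * S.ξ ^ 4 - S.c (n + 3) * S.c (n + 4) * S.η (n + 4) -
      2 * s n * S.c (n + 2) * S.c (n + 4) * S.ξ := by
  refine NearInt.of_eq_int_add (fun n => S.c (n + 3) * S.c (n + 4) ^ 2 -
      3 * S.c (n + 2) * S.c (n + 4) + 9 * S.c (n + 3))
    (((((ofOrder_s.mul ((ofOrder_c 2).mul (ofOrder_β 4))).const_mul (2 * S.ξ)).mono.add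
      ((ofOrder_η 3).const_mul (2 * S.ξ ^ 2)).mono).sub
      (((ofOrder_c 2).mul (ofOrder_η 4)).const_mul 3).mono).add ((ofOrder_η 3).const_mul 9).mono)
    fun n => ?_
  simp only [β, η]
  push_cast
  have hac : (S.a (n + 3) * S.c (n + 4) - S.b (n + 3) * S.b (n + 4) : ℝ) =
      s n * S.b (n + 2) := by rw [← s_add_two]; exact S.ac_sub_bb_succ (n + 2)
  have hba : (S.b (n + 3) * S.b (n + 4) - S.c (n + 3) * S.a (n + 4) : ℝ) =
      -3 * S.a (n + 2) + s n * S.b (n + 2) := by rw [← s_add_two]; exact S.bb_sub_ca_succ (n + 2)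
  have hac' : (S.a (n + 2) * S.c (n + 4) - S.b (n + 2) * S.b (n + 4) : ℝ) =
      -s n * S.b (n + 3) := by rw [← s_add_two]; exact S.ac_sub_bb_add_two (n + 2)
  have hba' : (S.b (n + 2) * S.b (n + 4) - S.c (n + 2) * S.a (n + 4) : ℝ) =
      -3 * S.a (n + 3) - s n * S.b (n + 3) := by rw [← s_add_two]; exact S.bb_sub_ca_add_two (n + 2)
  have hbc' : (S.b (n + 2) * S.c (n + 4) - S.c (n + 2) * S.b (n + 4) : ℝ) =
      -3 * S.b (n + 3) - s n * S.c (n + 3) := by rw [← s_add_two]; exact S.bc_sub_cb_add_two (n + 2)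
  linear_combination S.c (n + 4) * S.ξ ^ 2 * (hac + hba) - 3 * S.ξ ^ 2 * (hac' + hba') +
    2 * s n * S.ξ ^ 2 * hbc' - 2 * S.c (n + 3) * S.ξ ^ 2 * s_sq n

theorem cc_add_three_sub_cc (n : ℕ) :
    (S.c (n + 4) * S.c (n + 5) - S.c (n + 1) * S.c (n + 2) : ℝ) =
      3 * S.a (n + 3) * S.c (n + 4) ^ 2 - 3 * S.a (n + 2) * S.c (n + 2) * S.c (n + 3) := by
  linear_combination S.c (n + 4) * S.c_add_three (n + 2) - S.c (n + 2) * S.c_add_three (n + 1)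

theorem nearInt_cc_add_three_ξ :
    NearInt S.X (-1, 0) fun n => S.c (n + 4) * S.c (n + 5) * S.ξ - S.c (n + 1) * S.c (n + 2) * S.ξ -
      6 * S.a n * S.ξ ^ 3 := by
  refine ((((((nearInt_ac_sq_succ_ξ.const_mul 3).sub (nearInt_acc_succ_ξ.const_mul 3)).add
    (NearInt.of_ofOrder ofOrder_bc_succ_mul_β)).sub (NearInt.of_ofOrder ofOrder_bc_mul_β_succ)).sub
    (nearInt_a_add_three_ξ_pow_three.const_mul 9)).sub
    nearInt_a_add_three_ξ_pow_four.s_mul).congr fun n => ?_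
  push_cast
  linear_combination S.ξ * S.cc_add_three_sub_cc n - 6 * S.a n * S.ξ ^ 3 * s_sq n

theorem nearInt_cc_add_three_ξ_sq :
    NearInt S.X (-1, 0) fun n => S.c (n + 4) * S.c (n + 5) * S.ξ ^ 2 -
      S.c (n + 1) * S.c (n + 2) * S.ξ ^ 2 + 72 * s n * S.a n * S.ξ ^ 3 -
      12 * S.a n * S.ξ ^ 4 + 6 * s n * S.c (n + 1) * S.c (n + 2) * S.ξ := by
  refine (((((((((nearInt_ac_sq_succ_ξ_sq.const_mul 3).sub (nearInt_acc_succ_ξ_sq.const_mul 3)).add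
    (nearInt_acc_succ_ξ.s_mul.const_mul 18)).add (NearInt.of_ofOrder ofOrder_cc_succ_mul_η)).add
    ((NearInt.of_ofOrder ofOrder_bc_mul_β_succ).s_mul.const_mul 6)).sub
    (NearInt.of_ofOrder ofOrder_cc_add_bcξ_mul_β_succ)).sub
    (nearInt_a_add_three_ξ_pow_five.s_mul.const_mul 2)).sub
    (nearInt_a_add_three_ξ_pow_four.const_mul 12)).add
    (nearInt_a_add_three_ξ_pow_three.s_mul.const_mul 18)).congr fun n => ?_
  push_cast
  linear_combination S.ξ ^ 2 * S.cc_add_three_sub_cc n +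
    6 * s n * S.c (n + 2) * S.ξ * S.c_add_three (n + 1) -
    6 * S.a n * S.ξ ^ 4 * s_sq n

/-! ### Steps of length six -/

/-- The increment modulo one of `a n * ξ ^ 6` along steps of length six. -/
noncomputable def drift (n : ℕ) : ℝ :=
  -216 * s n * S.a n * S.ξ ^ 3 + 18 * S.a n * S.ξ ^ 4 -
    36 * s n * S.c (n + 1) * S.c (n + 2) * S.ξ

/-- The residue modulo one of `a (n + 1) ^ 2 * a (n + 3) * ξ ^ 6`. -/
noncomputable def residue (n : ℕ) : ℝ :=
  4 * s n * S.c (n + 1) * S.c (n + 2) * S.ξ - 12 * s n * S.a n * S.ξ ^ 3 +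
    4 * S.a n * S.ξ ^ 4

theorem nearInt_a_add_six_ξ_pow_six :
    NearInt S.X (-1, 0) fun n => S.a (n + 6) * S.ξ ^ 6 - S.a n * S.ξ ^ 6 - S.drift n := by
  refine (((((nearInt_a_add_three_ξ_pow_six.shift.shift.shift.mono).sub
    nearInt_a_add_three_ξ_pow_six).add
    (nearInt_cc_add_three_ξ_sq.const_mul 3)).sub
    (nearInt_a_add_three_ξ_pow_five.s_mul.const_mul 6)).sub
    (nearInt_a_add_three_ξ_pow_four.const_mul 9)).congr fun n => ?_
  simp only [drift, add_assoc, Nat.reduceAdd, s_add_three]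
  push_cast
  linear_combination (-36 * S.a n * S.ξ ^ 4) * s_sq n

theorem nearInt_a_add_six_ξ_pow_three :
    NearInt S.X (-1, 0) fun n => S.a (n + 6) * S.ξ ^ 3 - S.a n * S.ξ ^ 3 :=
  (nearInt_a_add_three_ξ_pow_three.shift.shift.shift.mono.sub
    nearInt_a_add_three_ξ_pow_three).congr fun n => by ring

theorem nearInt_a_add_six_ξ_pow_four :
    NearInt S.X (-1, 0) fun n => S.a (n + 6) * S.ξ ^ 4 - S.a n * S.ξ ^ 4 :=
  ((nearInt_a_add_three_ξ_pow_four.shift.shift.shift.mono.sub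
    nearInt_a_add_three_ξ_pow_four).sub
    (nearInt_a_add_three_ξ_pow_three.s_mul.const_mul 6)).congr fun n => by
    simp only [add_assoc, Nat.reduceAdd, s_add_three]
    push_cast
    ring

theorem nearInt_cc_add_six_ξ :
    NearInt S.X (-1, 0) fun n =>
      S.c (n + 7) * S.c (n + 8) * S.ξ - S.c (n + 1) * S.c (n + 2) * S.ξ :=
  ((nearInt_cc_add_three_ξ.shift.shift.shift.mono.add nearInt_cc_add_three_ξ).add
    (nearInt_a_add_three_ξ_pow_three.const_mul 6)).congr fun n => by
    simp only [add_assoc, Nat.reduceAdd]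
    push_cast
    ring

theorem nearInt_drift_add_six :
    NearInt S.X (-1, 0) fun n => S.drift (n + 6) - S.drift n := by
  refine (((nearInt_a_add_six_ξ_pow_three.s_mul.const_mul (-216)).add
    (nearInt_a_add_six_ξ_pow_four.const_mul 18)).sub
    (nearInt_cc_add_six_ξ.s_mul.const_mul 36)).congr fun n => ?_
  simp only [drift, add_assoc, Nat.reduceAdd, s_add_six]
  push_cast
  ring

theorem nearInt_residue_add_six :
    NearInt S.X (-1, 0) fun n => S.residue (n + 6) - S.residue n := by
  refine (((nearInt_cc_add_six_ξ.s_mul.const_mul 4).sub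
    (nearInt_a_add_six_ξ_pow_three.s_mul.const_mul 12)).add
    (nearInt_a_add_six_ξ_pow_four.const_mul 4)).congr fun n => ?_
  simp only [residue, add_assoc, Nat.reduceAdd, s_add_six]
  push_cast
  ring

/-! ### Multiples of the residue -/

theorem nearInt_aa_add_two_ξ_pow_three :
    NearInt S.X (0, -1) fun n => S.a n * S.a (n + 2) * S.ξ ^ 3 := by
  refine NearInt.of_eq_int_add (fun n => S.b n * S.c (n + 2) - s n * S.c (n + 1))
    ((((ofOrder_b 0).mul (ofOrder_η 2)).mono.add
      (((ofOrder_a 0).mul (ofOrder_α 2)).const_mul (S.ξ ^ 2)).mono).sub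
      (ofOrder_s.mul (ofOrder_η 1)).mono) fun n => ?_
  simp only [α, η, add_zero]
  push_cast
  linear_combination S.ξ ^ 2 * S.ab_sub_ba_add_two n

theorem nearInt_aa_add_two_ξ_pow_four :
    NearInt S.X (0, -1) fun n => S.a n * S.a (n + 2) * S.ξ ^ 4 +
      2 * s n * S.a (n + 1) * S.ξ ^ 3 := by
  refine NearInt.of_eq_int_add (fun n => S.c n * S.c (n + 2) - 3 * S.c (n + 1))
    (((((ofOrder_c 0).mul (ofOrder_η 2)).mono.add
      (((ofOrder_a 0).mul (ofOrder_η 2)).const_mul (S.ξ ^ 2)).mono).add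
      ((ofOrder_s.mul (ofOrder_α 1)).const_mul (2 * S.ξ ^ 2)).mono).sub
      ((ofOrder_η 1).const_mul 3).mono)
    fun n => ?_
  simp only [α, η, add_zero]
  push_cast
  linear_combination S.ξ ^ 2 * S.ac_sub_bb_add_two n + S.ξ ^ 2 * S.bb_sub_ca_add_two n

theorem nearInt_aab_succ_ξ :
    NearInt S.X (0, -1) fun n => 3 * S.a (n + 1) * S.a (n + 2) * S.b (n + 2) * S.ξ := by
  refine NearInt.of_eq_int_add (fun n => 3 * S.a (n + 1) * S.b (n + 2) ^ 2 - s n * S.b (n + 1))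
    (((((ofOrder_a 1).mul ofOrder_three_mul_aα_add_two).const_mul S.ξ).mono.sub
      (((ofOrder_a 1).mul ((ofOrder_α 2).mul (ofOrder_α 2))).const_mul 3).mono).sub
      (ofOrder_s.mul (ofOrder_α 1)).mono) fun n => ?_
  simp only [α]
  push_cast
  ring

theorem nearInt_aac_succ_ξ :
    NearInt S.X (0, -1) fun n => 3 * S.a (n + 1) * S.a (n + 2) * S.c (n + 2) * S.ξ := by
  refine NearInt.of_eq_int_add
    (fun n => 3 * S.a (n + 1) * S.b (n + 2) * S.c (n + 2) - s n * S.c (n + 1))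
    (((((ofOrder_a 1).mul ofOrder_three_mul_aα_add_two).const_mul (S.ξ ^ 2)).mono.sub
      (((ofOrder_a 1).mul ((ofOrder_α 2).mul (ofOrder_η 2))).const_mul 3).mono).sub
      (ofOrder_s.mul (ofOrder_η 1)).mono) fun n => ?_
  simp only [α, η]
  push_cast
  ring

theorem nearInt_ab_mul_c_add_four_ξ :
    NearInt S.X (0, -1) fun n => 3 * S.a (n + 1) * S.b (n + 1) * S.c (n + 4) * S.ξ := by
  have hacb : NearInt S.X (0, -1) fun n =>
      3 * S.a (n + 1) * S.c (n + 1) * S.b (n + 4) * S.ξ := by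
    refine NearInt.of_eq_int_add (fun n => 3 * S.a (n + 1) * S.c (n + 1) * S.c (n + 4))
      ((((ofOrder_a 1).mul (ofOrder_c 1)).mul (ofOrder_β 4)).const_mul 3).mono fun n => ?_
    simp only [β]
    push_cast
    ring
  refine ((hacb.sub (nearInt_aab_succ_ξ.const_mul 9)).add
    (nearInt_aac_succ_ξ.s_mul.const_mul 3)).congr fun n => ?_
  push_cast
  linear_combination 3 * S.a (n + 1) * S.ξ * S.bc_sub_cb_add_three (n + 1) -
    9 * S.a (n + 1) * S.a (n + 2) * S.c (n + 2) * S.ξ * s_succ n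

theorem nearInt_bb_mul_c_add_four_ξ :
    NearInt S.X (0, -1) fun n => S.b n * S.b (n + 3) * S.c (n + 4) * S.ξ +
      S.a (n + 1) * S.ξ ^ 3 := by
  refine NearInt.of_eq_int_add (fun n => S.b n * S.c (n + 3) * S.c (n + 4) -
      3 * S.b n * S.c (n + 2) + s n * S.c n * S.c (n + 2) - 3 * s n * S.c (n + 1))
    (((((((ofOrder_b 0).mul (ofOrder_c 3)).mul (ofOrder_β 4)).mono.sub
      (((ofOrder_b 0).mul (ofOrder_β 2)).const_mul 3).mono).add
      (ofOrder_s.mul ((ofOrder_c 0).mul (ofOrder_β 2))).mono).sub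
      ((ofOrder_s.mul (ofOrder_β 1)).const_mul 3).mono).add
      ((ofOrder_η 1).const_mul S.ξ).mono) fun n => ?_
  simp only [β, η, add_zero]
  push_cast
  linear_combination S.b n * S.ξ * S.bc_sub_cb_succ (n + 2) +
    S.b n * S.c (n + 2) * S.ξ * s_add_two n + s n * S.ξ * S.bc_sub_cb_add_two n -
    S.c (n + 1) * S.ξ * s_sq n

theorem nearInt_a_mul_cc_add_three_ξ :
    NearInt S.X (0, -1) fun n => S.a n * S.c (n + 3) * S.c (n + 4) * S.ξ := by
  refine (((nearInt_bb_mul_c_add_four_ξ.sub nearInt_ab_mul_c_add_four_ξ.s_mul).add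
    (NearInt.of_ofOrder ((ofOrder_η 4).const_mul S.ξ).mono)).sub
    nearInt_a_add_three_ξ_pow_three.shift.mono).congr fun n => ?_
  simp only [η]
  linear_combination S.c (n + 4) * S.ξ * S.ac_sub_bb_add_three n

theorem nearInt_a_mul_residue :
    NearInt S.X (0, -1) fun n => S.a n * S.residue (n + 2) + 8 * s n * S.a (n + 1) * S.ξ ^ 3 := by
  refine (((nearInt_a_mul_cc_add_three_ξ.s_mul.const_mul 4).sub
    (nearInt_aa_add_two_ξ_pow_three.s_mul.const_mul 12)).add
    (nearInt_aa_add_two_ξ_pow_four.const_mul 4)).congr fun n => ?_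
  simp only [residue, add_assoc, Nat.reduceAdd, s_add_two]
  push_cast
  ring

theorem nearInt_aa_add_three_ξ_pow_three :
    NearInt S.X (-1, 0) fun n => S.a n * S.a (n + 3) * S.ξ ^ 3 + 2 * S.ξ := by
  refine NearInt.of_eq_int_add (fun n => S.b n * S.c (n + 3) - 3 * s n * S.b (n + 1) ^ 2)
    (((((ofOrder_b 0).mul (ofOrder_η 3)).mono.add
      (((ofOrder_a 0).mul (ofOrder_α 3)).const_mul (S.ξ ^ 2)).mono).sub
      ((ofOrder_s.mul ofOrder_three_mul_aα_succ).const_mul (2 * S.ξ)).mono).add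
      ((ofOrder_s.mul ((ofOrder_α 1).mul (ofOrder_α 1))).const_mul 3).mono) fun n => ?_
  simp only [α, η, add_zero]
  push_cast
  linear_combination S.ξ ^ 2 * S.ab_sub_ba_add_three n - 2 * S.ξ * s_sq n

theorem nearInt_aa_mul_residue :
    NearInt S.X (-1, 0) fun n => S.a n * S.a (n + 2) * S.residue (n + 4) - s n * (16 * S.ξ) := by
  refine ((NearInt.int_mul (m := S.a) (ofOrder_a 0) nearInt_a_mul_residue.shift.shift).mono.sub
    (nearInt_aa_add_three_ξ_pow_three.s_mul.const_mul 8)).congr fun n => ?_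
  simp only [add_assoc, Nat.reduceAdd, s_add_two]
  push_cast
  ring

theorem nearInt_sq_mul_drift :
    NearInt S.X (-1, 0) fun n => S.a (n + 1) ^ 2 * S.drift (n + 3) := by
  have h : NearInt S.X (1, -1) fun n => S.a n * (S.a n * S.drift (n + 2)) +
      36 * s n * (S.a n * S.a (n + 1) * S.ξ ^ 3) := by
    refine (NearInt.int_mul (m := S.a) (ofOrder_a 0)
      (((nearInt_aa_add_two_ξ_pow_three.s_mul.const_mul (-216)).add
        (nearInt_aa_add_two_ξ_pow_four.const_mul 18)).sub
        (nearInt_a_mul_cc_add_three_ξ.s_mul.const_mul 36))).mono.congr fun n => ?_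
    simp only [drift, add_assoc, Nat.reduceAdd, s_add_two]
    push_cast
    ring
  refine (h.shift.mono.add (nearInt_aa_succ_ξ_pow_three.s_mul.const_mul 36)).congr fun n => ?_
  simp only [add_assoc, Nat.reduceAdd, s_succ]
  push_cast
  ring

theorem nearInt_sq_mul_ξ_pow_six :
    NearInt S.X (-1, 0) fun n => S.a (n + 1) ^ 2 * (S.a (n + 3) * S.ξ ^ 6) - S.residue n := by
  have hstep : OfOrder S.X (0, -1) fun n => S.a n * S.a (n + 2) * S.ξ ^ 6 +
      2 * s n * S.a (n + 1) * S.ξ ^ 5 + 3 * S.a (n + 1) * S.ξ ^ 4 -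
      S.c n * S.a (n + 2) * S.ξ ^ 4 := by
    refine ((((ofOrder_a 0).mul (ofOrder_η 2)).const_mul (S.ξ ^ 4)).mono.add
      ((ofOrder_s.mul (ofOrder_α 1)).const_mul (2 * S.ξ ^ 4)).mono).congr fun n => ?_
    simp only [α, η, add_zero]
    linear_combination S.ξ ^ 4 * S.ac_sub_bb_add_two n + S.ξ ^ 4 * S.bb_sub_ca_add_two n
  have h : NearInt S.X (1, -1) fun n => S.a n ^ 2 * (S.a (n + 2) * S.ξ ^ 6) +
      2 * s n * (S.a n * S.a (n + 1) * S.ξ ^ 5) + 3 * (S.a n * S.a (n + 1) * S.ξ ^ 4) +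
      2 * s n * (S.c n * S.c (n + 1) * S.ξ) := by
    refine (((NearInt.of_ofOrder ((ofOrder_a 0).mul hstep)).mono.add
      (NearInt.int_mul (m := S.c) (ofOrder_c 0) nearInt_aa_add_two_ξ_pow_four).mono).sub
      (NearInt.of_ofOrder
        ((ofOrder_s.mul ((ofOrder_c 0).mul (ofOrder_η 1))).const_mul (2 * S.ξ))).mono).congr
      fun n => ?_
    simp only [η, add_zero]
    ring
  refine ((h.shift.mono.add (nearInt_aa_succ_ξ_pow_five.s_mul.const_mul 2)).sub
    (nearInt_aa_succ_ξ_pow_four.const_mul 3)).congr fun n => ?_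
  simp only [residue, add_assoc, Nat.reduceAdd, s_succ]
  push_cast
  linear_combination (4 * S.a n * S.ξ ^ 4) * s_sq n

variable (S)

/-! ### The fractional parts along steps of length six -/

theorem isBigO_a_sq_mul_inv_X :
    (fun n => ((S.a (n + 1) ^ 2 : ℤ) : ℝ) * (S.X (n + 3))⁻¹) =O[atTop] fun n => (S.X n)⁻¹ := by
  simp only [pow_two, Int.cast_mul]
  exact (((ofOrder_a 1).mul (ofOrder_a 1)).mul (ofOrder_inv_X 3)).mono.isBigO_inv

theorem isBigO_aa_mul_inv_X :
    (fun n => ((S.a n * S.a (n + 2) : ℤ) : ℝ) * (S.X (n + 4))⁻¹) =O[atTop]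
      fun n => (S.X n)⁻¹ := by
  simp only [Int.cast_mul]
  exact (((ofOrder_a 0).mul (ofOrder_a 2)).mul (ofOrder_inv_X 4)).mono.isBigO_inv

theorem isBigO_sq_zsmul_sub_residue :
    (fun i : ℕ × ℕ => S.a (i.1 + 1) ^ 2 •
        ((S.a (i.1 + 3 + 6 * i.2) * S.ξ ^ 6 : ℝ) : UnitAddCircle) - (S.residue i.1 : ℝ))
      =O[atTop ×ˢ ⊤] fun i => (S.X i.1)⁻¹ * (i.2 + 1) := by
  have hsum := isBigO_zsmul_comp_shift (u := fun n => (S.X n)⁻¹) (v := fun t => t)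
    (FibonacciGrowth.isBigO_sub_sub_nsmul_of_isBigO_step S.X (p := 6)
      (f := fun n => ((S.a n * S.ξ ^ 6 : ℝ) : UnitAddCircle))
      (g := fun n => (S.drift n : UnitAddCircle)) (by decide)
      nearInt_a_add_six_ξ_pow_six.isBigO_inv nearInt_drift_add_six.isBigO_inv)
    S.isBigO_a_sq_mul_inv_X
  have hdrift := isBigO_zsmul (isBigO_refl (fun i : ℕ × ℕ => ((i.2 : ℤ) : ℝ)) (atTop ×ˢ ⊤))
    ((nearInt_sq_mul_drift (S := S)).isBigO_inv.comp_tendsto tendsto_fst)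
  have hbase := (nearInt_sq_mul_ξ_pow_six (S := S)).isBigO_inv.comp_tendsto
    (tendsto_fst (g := (⊤ : Filter ℕ)))
  have hone : (fun i : ℕ × ℕ => (S.X i.1)⁻¹) =O[atTop ×ˢ ⊤] fun i => (S.X i.1)⁻¹ * (i.2 + 1) := by
    refine .of_norm_le fun i => ?_
    have := FibonacciGrowth.pos S.X i.1
    rw [Real.norm_of_nonneg (by positivity)]
    exact le_mul_of_one_le_right (by positivity) (by simp)
  have hcast : (fun i : ℕ × ℕ => (S.X i.1)⁻¹ * i.2) =O[atTop ×ˢ ⊤]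
      fun i => (S.X i.1)⁻¹ * (i.2 + 1) := by
    refine .of_norm_le fun i => ?_
    have := FibonacciGrowth.pos S.X i.1
    rw [Real.norm_of_nonneg (by positivity)]
    gcongr
    simp
  refine (((hsum.trans hcast).add ((hdrift.congr_right fun i => ?_).trans hcast)).add
    (hbase.trans hone)).congr_left fun i => ?_
  · simp [mul_comm]
  · simp only [Function.comp_apply, AddCircle.coe_sub, QuotientAddGroup.mk_int_mul,
      smul_sub, ← Int.cast_pow, natCast_zsmul, smul_comm i.2 (S.a (i.1 + 1) ^ 2)]
    abel

theorem isBigO_zsmul_residue_sub :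
    (fun i : ℕ × ℕ => (S.a i.1 * S.a (i.1 + 2)) • (S.residue (i.1 + 4 + 6 * i.2) : UnitAddCircle)
        - s i.1 • ((16 * S.ξ : ℝ) : UnitAddCircle))
      =O[atTop ×ˢ ⊤] fun i => (S.X i.1)⁻¹ := by
  have hstep := FibonacciGrowth.isBigO_sub_of_isBigO_step S.X (p := 6)
    (f := fun n => (S.residue n : UnitAddCircle)) (by decide) nearInt_residue_add_six.isBigO_inv
  have hsum := isBigO_zsmul_comp_shift (u := fun n => (S.X n)⁻¹) (v := fun _ => 1)
    (hstep.congr_right fun i => (mul_one _).symm) S.isBigO_aa_mul_inv_X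
  have hbase := (nearInt_aa_mul_residue (S := S)).isBigO_inv.comp_tendsto
    (tendsto_fst (g := (⊤ : Filter ℕ)))
  refine ((hsum.congr_right fun i => mul_one _).add hbase).congr_left fun i => ?_
  simp only [Function.comp_apply, AddCircle.coe_sub, mul_assoc, QuotientAddGroup.mk_int_mul,
    smul_sub, mul_smul]
  abel

theorem irrational_ξ : Irrational S.ξ := by
  rintro ⟨r, hr⟩
  have hα : Tendsto (fun n => r.den * S.α n) atTop (𝓝 0) := by
    simpa using (S.isBigO_α.trans_tendsto (FibonacciGrowth.tendsto_inv S.X)).const_mul (r.den : ℝ)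
  have hab (n : ℕ) : ((r.num * S.a n - r.den * S.b n : ℤ) : ℝ) = r.den * S.α n := by
    have hden : (r.den : ℝ) * S.ξ = r.num := by rw [← hr]; exact_mod_cast r.den_mul_eq_num
    simp only [α]
    push_cast
    linear_combination -S.a n * hden
  have hzero : ∀ᶠ n in atTop, S.α n = 0 := by
    filter_upwards [hα.eventually (Metric.ball_mem_nhds 0 one_pos)] with n hn
    replace hn := mem_ball_zero_iff.1 hn
    rw [← hab, Real.norm_eq_abs, ← Int.cast_abs, ← Int.cast_one, Int.cast_lt] at hn
    have hn0 := hab n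
    rw [Int.abs_lt_one_iff.1 hn, Int.cast_zero, zero_eq_mul] at hn0
    exact hn0.resolve_left (mod_cast r.den_nz)
  obtain ⟨n, h, h'⟩ := (hzero.and ((tendsto_add_atTop_nat 2).eventually hzero)).exists
  have ha : (s n * S.a (n + 1) : ℝ) = 0 := by
    have := S.ab_sub_ba_add_two n
    simp only [α] at h h'
    linear_combination S.a n * h' - S.a (n + 2) * h + this
  refine S.a_ne_zero (n + 1) (mod_cast (mul_eq_zero.1 ha).resolve_left ?_)
  exact norm_ne_zero_iff.1 (by rw [norm_s]; exact one_ne_zero)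

theorem one_isBigO_zsmul_residue {q : ℤ} (hq : q ≠ 0) :
    (fun _ => (1 : ℝ)) =O[atTop] fun n => q • (S.residue n : UnitAddCircle) := by
  set y : UnitAddCircle := q • ((16 * S.ξ : ℝ) : UnitAddCircle)
  have hy : 0 < ‖y‖ := by
    have hirr : Irrational (q * (16 * S.ξ)) :=
      (S.irrational_ξ.natCast_mul (m := 16) (by decide)).intCast_mul hq
    simpa only [y, QuotientAddGroup.mk_int_mul] using norm_coe_unitAddCircle_pos_of_irrational hirr
  have hlim : Tendsto (fun i : ℕ × ℕ => (S.a i.1 * S.a (i.1 + 2)) •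
      (q • (S.residue (i.1 + 4 + 6 * i.2) : UnitAddCircle)) - s i.1 • y) (atTop ×ˢ ⊤) (𝓝 0) := by
    have h := (S.isBigO_zsmul_residue_sub.trans_tendsto
      ((FibonacciGrowth.tendsto_inv S.X).comp tendsto_fst)).const_smul q
    rw [smul_zero] at h
    exact h.congr fun i => by rw [smul_sub, smul_comm q, smul_comm q]
  have hclose := mem_prod_top.1 (hlim.eventually (Metric.ball_mem_nhds 0 (half_pos hy)))
  obtain ⟨N, hN⟩ := eventually_atTop.1 hclose
  refine one_isBigO_of_forall_le_norm_zsmul (p := 6) (r := 4) (N := N) (by decide) (half_pos hy)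
    (m := fun n => S.a n * S.a (n + 2)) fun n hn t => ?_
  have h := mem_ball_zero_iff.1 (hN n hn t)
  have hs : ‖s n • y‖ = ‖y‖ := by
    rcases neg_one_pow_eq_or ℤ (n + 1) with h | h <;> simp [s, h]
  have := norm_sub_norm_le (s n • y) ((S.a n * S.a (n + 2)) •
      (q • (S.residue (n + 4 + 6 * t) : UnitAddCircle)))
  rw [norm_sub_rev, hs] at this
  linarith

theorem irrational_ξ_pow_six : Irrational (S.ξ ^ 6) := by
  rintro ⟨r, hr⟩
  have hint (n : ℕ) : (r.den : ℤ) • ((S.a n * S.ξ ^ 6 : ℝ) : UnitAddCircle) = 0 := by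
    rw [← QuotientAddGroup.mk_int_mul, ← coe_intCast_unitAddCircle (S.a n * r.num), ← hr]
    congr 1
    have hden : (r.den * r : ℝ) = r.num := by exact_mod_cast r.den_mul_eq_num
    push_cast
    linear_combination S.a n * hden
  have hzero : Tendsto (fun n => (r.den : ℤ) • (S.residue n : UnitAddCircle)) atTop (𝓝 0) := by
    have h := ((nearInt_sq_mul_ξ_pow_six (S := S)).const_mul r.den).isBigO_inv.trans_tendsto
      (FibonacciGrowth.tendsto_inv S.X)
    rw [← neg_zero]
    refine h.neg.congr fun n => ?_
    rw [QuotientAddGroup.mk_int_mul, AddCircle.coe_sub, ← Int.cast_pow,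
      QuotientAddGroup.mk_int_mul, smul_sub, smul_comm, hint, smul_zero, zero_sub, neg_neg]
  exact one_ne_zero (tendsto_nhds_unique tendsto_const_nhds
    ((S.one_isBigO_zsmul_residue (q := r.den) (mod_cast r.den_nz)).trans_tendsto hzero))

theorem rpow_isBigO_a_mul_ξ_pow_six :
    (fun k : ℕ => ((k + 1 : ℕ) : ℝ) ^ (-(2 * Real.goldenRatio ^ 7))) =O[atTop]
      fun k => ((S.a k * S.ξ ^ 6 : ℝ) : UnitAddCircle) := by
  have hm : (fun n => ((S.a (n + 1) ^ 2 : ℤ) : ℝ)) =O[atTop] fun n => S.X (n + 1) ^ 2 :=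
    .of_norm_le fun n => by
      rw [Int.cast_pow, norm_pow]
      exact pow_le_pow_left₀ (norm_nonneg _) (S.abs_a_le (n + 1)) 2
  have hshift : (fun k : ℕ => ((k + 1 : ℕ) : ℝ) ^ (-(2 * Real.goldenRatio ^ 7))) =O[atTop]
      fun k : ℕ => (k : ℝ) ^ (-((2 : ℕ) * Real.goldenRatio ^ 7)) := by
    refine IsBigO.of_norm_eventuallyLE ((eventually_ge_atTop 1).mono fun k hk => ?_)
    have hk' : (0 : ℝ) < k := mod_cast hk
    beta_reduce
    rw [Real.norm_of_nonneg (by positivity), Nat.cast_two]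
    exact Real.rpow_le_rpow_of_nonpos hk' (mod_cast k.le_succ)
      (neg_nonpos.2 (by have := Real.goldenRatio_pos; positivity))
  exact hshift.trans (FibonacciGrowth.rpow_isBigO_of_isBigO_zsmul_sub S.X
    Real.goldenRatio_pos.le S.isTheta_X_succ.1 (by decide) hm
    (by simpa only [one_smul] using S.one_isBigO_zsmul_residue one_ne_zero)
    S.isBigO_sq_zsmul_sub_residue)

end MarkoffSystem

theorem stmt19 (ξ : ℝ) (x : ℕ → Matrix (Fin 2) (Fin 2) ℤ) (hx : MarkoffSeq ξ x) :
    ∃ c : ℝ, 0 < c ∧ ∀ k : ℕ, 1 ≤ k →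
      distInt ((x k 0 0 : ℝ) * ξ^6) ≥ c * (k : ℝ) ^ (-(2 * gold^7)) := by
  let S : MarkoffSystem := ⟨ξ, x, hx⟩
  have hpos (n : ℕ) : 0 < ‖((S.a n * ξ ^ 6 : ℝ) : UnitAddCircle)‖ :=
    norm_coe_unitAddCircle_pos_of_irrational
      (S.irrational_ξ_pow_six.intCast_mul (S.a_ne_zero n))
  obtain ⟨C, hC, hbound⟩ := bound_of_isBigO_nat_atTop S.rpow_isBigO_a_mul_ξ_pow_six
  refine ⟨C⁻¹, inv_pos.2 hC, fun k hk => ?_⟩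
  obtain ⟨n, rfl⟩ := Nat.exists_eq_add_of_le' hk
  have h := hbound (norm_pos_iff.1 (hpos n))
  rw [Real.norm_of_nonneg (by positivity), UnitAddCircle.norm_eq] at h
  exact (inv_mul_le_iff₀ hC).2 h
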